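/- arXiv:2206.02863 — 2 statements merged into one kernel-verified Lean document; each statement's English description precedes it below -/
import Mathlib

section
/- r_7 = (1 + 12√2)/7. That is, the maximum of ‖M‖_S over all 7×7 real matrices M with entries of absolute value at most 1 equals (1 + 12√2)/7, and it is attained by a circulant ±1 matrix. -/
open scoped ComplexOrder

/-- The operator norm (induced by Euclidean norms) of a complex matrix. -/
noncomputable def Matrix.copNorm {m n : Type*} [Fintype m] [Fintype n] [DecidableEq n]
    (M : Matrix m n ℂ) : ℝ :=
  ‖LinearMap.toContinuousLinearMap (Matrix.toEuclideanLin M)‖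

/-- The operator norm (induced by Euclidean norms) of a real matrix. -/
noncomputable def Matrix.ropNorm {m n : Type*} [Fintype m] [Fintype n] [DecidableEq n]
    (M : Matrix m n ℝ) : ℝ :=
  ‖LinearMap.toContinuousLinearMap (Matrix.toEuclideanLin M)‖

/-- The Schur norm of a complex square matrix: the supremum of `‖M ∘ C‖` over all
complex contractions `C`, where `∘` is the entrywise (Schur/Hadamard) product. -/
noncomputable def Matrix.schurNorm {n : Type*} [Fintype n] [DecidableEq n]
    (M : Matrix n n ℂ) : ℝ :=
  sSup {x | ∃ C : Matrix n n ℂ, Matrix.copNorm C ≤ 1 ∧ x = Matrix.copNorm (Matrix.hadamard M C)}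

/-- `rSchur n`: the supremum of Schur norms of `n × n` real matrices whose entries all have
absolute value at most `1`. -/
noncomputable def rSchur (n : ℕ) : ℝ :=
  sSup {x | ∃ M : Matrix (Fin n) (Fin n) ℝ, (∀ i j, |M i j| ≤ 1) ∧
    x = Matrix.schurNorm (M.map Complex.ofReal)}

/-!
By duality `‖M‖_S` is the maximum, over unit vectors `u` and `v`, of the trace norm of
`B = diag(u) M diag(v)`. If `M` has order `n` and entries of modulus at most `1`, then `B` has
Frobenius norm at most `1` and `|det B| ≤ n⁻ⁿ |det M|`. Among `n` nonnegative numbers with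
prescribed bounds on the sum of squares and on the product, the sum is controlled by replacing the
logarithm with a quadratic interpolating it at `1` and, doubly, at `r = √(n + 1)`. The outcome is
`‖M‖_S ≤ (1 + (n - 1) r) / n` as soon as `|det M| ≤ r ^ (n - 1)`. Equality holds when
`M Mᵀ = (n + 1) I - J`, as one sees by testing on the orthogonal polar factor of `M`; the circulant
Paley matrix of order `7` is of this kind.

For `n = 7` the bound is `(1 + 12√2) / 7` and the condition is `|det M| ≤ 512`. By convexity of the
Schur norm it remains to treat the `±1` matrices with `|det M| > 512`. Such a determinant is a
multiple of `64`, hence at least `576`. After changing the signs of rows, the off-diagonal entries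
of `G = M Mᵀ` are `3` modulo `4`, and an entry of modulus at least `5` would make `det M` too small,
so they are `-1` or `3`. Bounding `det G` through Schur complements of its `3 × 3` blocks shows that
no row has two entries `3` and that at most two rows have none, so by parity the entries `3` form
three disjoint pairs. For this single Gram matrix the factorization
`M = ((1 - T) M) · 1 + (T d^(-1/2)) · (d^(1/2) M)`, with a suitable matrix `T` and a diagonal matrix
`d`, bounds `‖M‖_S` by a number below `(1 + 12√2) / 7`.
-/

section OperatorNorm

open scoped Matrix.Norms.L2Operator Matrix InnerProductSpace

variable {m n : Type*} [Fintype m] [Fintype n] [DecidableEq n]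

theorem copNorm_eq_norm (A : Matrix m n ℂ) : A.copNorm = ‖A‖ := rfl

theorem norm_vecMul_dotProduct_le (A : Matrix m n ℂ) (u : EuclideanSpace ℂ m)
    (v : EuclideanSpace ℂ n) : ‖u.ofLp ᵥ* A ⬝ᵥ v.ofLp‖ ≤ ‖A‖ * (‖u‖ * ‖v‖) := by
  have hinner : u.ofLp ᵥ* A ⬝ᵥ v.ofLp
      = ⟪WithLp.toLp 2 (star u.ofLp), WithLp.toLp 2 (A *ᵥ v.ofLp)⟫_ℂ := by
    rw [EuclideanSpace.inner_toLp_toLp, star_star, ← Matrix.dotProduct_mulVec,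
      dotProduct_comm]
  have hstar : ‖WithLp.toLp 2 (star u.ofLp)‖ = ‖u‖ := by
    simp [EuclideanSpace.norm_eq]
  calc ‖u.ofLp ᵥ* A ⬝ᵥ v.ofLp‖ ≤ ‖u‖ * ‖WithLp.toLp 2 (A *ᵥ v.ofLp)‖ := by
        rw [hinner, ← hstar]; exact norm_inner_le_norm _ _
    _ ≤ ‖u‖ * (‖A‖ * ‖v‖) := by gcongr; exact A.l2_opNorm_mulVec v
    _ = ‖A‖ * (‖u‖ * ‖v‖) := by ring

theorem norm_le_of_norm_vecMul_dotProduct_le {A : Matrix m n ℂ} {K : ℝ} (hK : 0 ≤ K)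
    (h : ∀ (u : EuclideanSpace ℂ m) (v : EuclideanSpace ℂ n), ‖u‖ = 1 → ‖v‖ = 1 →
      ‖u.ofLp ᵥ* A ⬝ᵥ v.ofLp‖ ≤ K) : ‖A‖ ≤ K := by
  refine ContinuousLinearMap.opNorm_le_of_re_inner_le (𝕜 := ℂ) hK fun v u hv hu => ?_
  have hinner : ⟪WithLp.toLp 2 (A *ᵥ v.ofLp), u⟫_ℂ
      = star (star u.ofLp ᵥ* A ⬝ᵥ v.ofLp) := by
    rw [EuclideanSpace.inner_eq_star_dotProduct, ← Matrix.dotProduct_mulVec,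
      Matrix.star_dotProduct, star_star,
      dotProduct_comm]
  refine (RCLike.re_le_norm _).trans ?_
  change ‖⟪WithLp.toLp 2 (A *ᵥ v.ofLp), u⟫_ℂ‖ ≤ K
  rw [hinner, norm_star]
  exact h (WithLp.toLp 2 (star u.ofLp)) v (by simpa [EuclideanSpace.norm_eq] using hu) hv

theorem norm_sum_entries_le (A : Matrix n n ℂ) :
    ‖∑ i, ∑ j, A i j‖ ≤ Fintype.card n * ‖A‖ := by
  have h := norm_vecMul_dotProduct_le A (WithLp.toLp 2 1) (WithLp.toLp 2 1)
  have hone : ‖WithLp.toLp 2 (1 : n → ℂ)‖ * ‖WithLp.toLp 2 (1 : n → ℂ)‖ = Fintype.card n := by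
    simp [EuclideanSpace.norm_eq]
  rw [hone, mul_comm, ← Matrix.dotProduct_mulVec] at h
  simpa [dotProduct, Matrix.mulVec] using h

end OperatorNorm

section SchurNorm

open scoped Matrix.Norms.L2Operator Matrix

variable {n : Type*} [Fintype n] [DecidableEq n]

theorem bddAbove_norm_hadamard (M : Matrix n n ℂ) :
    BddAbove {x | ∃ C : Matrix n n ℂ, C.copNorm ≤ 1 ∧ x = (M ⊙ C).copNorm} := by
  have hcont : Continuous fun C : Matrix n n ℂ => ‖M ⊙ C‖ :=
    (continuous_matrix fun i j => by simpa using (continuous_id.matrix_elem i j).const_mul _).norm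
  have := (isCompact_closedBall (0 : Matrix n n ℂ) 1).bddAbove_image hcont.continuousOn
  refine this.mono ?_
  rintro _ ⟨C, hC, rfl⟩
  exact ⟨C, mem_closedBall_zero_iff.2 hC, rfl⟩

theorem norm_hadamard_le_schurNorm (M : Matrix n n ℂ) {C : Matrix n n ℂ} (hC : ‖C‖ ≤ 1) :
    ‖M ⊙ C‖ ≤ M.schurNorm :=
  le_csSup (bddAbove_norm_hadamard M) ⟨C, hC, rfl⟩

theorem schurNorm_le_iff {M : Matrix n n ℂ} {K : ℝ} :
    M.schurNorm ≤ K ↔ ∀ C : Matrix n n ℂ, ‖C‖ ≤ 1 → ‖M ⊙ C‖ ≤ K := by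
  refine ⟨fun h C hC => (norm_hadamard_le_schurNorm M hC).trans h, fun h => csSup_le ?_ ?_⟩
  · exact ⟨_, 0, by simp [copNorm_eq_norm], rfl⟩
  · rintro _ ⟨C, hC, rfl⟩
    exact h C hC

theorem convex_setOf_schurNorm_le (K : ℝ) :
    Convex ℝ {M : Matrix n n ℂ | M.schurNorm ≤ K} := by
  simp only [schurNorm_le_iff, Set.ofPred_forall]
  refine convex_iInter₂ fun C _ => ?_
  have : {M : Matrix n n ℂ | ‖M ⊙ C‖ ≤ K}
    = (fun M : Matrix n n ℂ => M ⊙ C) ⁻¹' Metric.closedBall 0 K := by ext; simp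
  rw [this]
  refine (convex_closedBall (0 : Matrix n n ℂ) K).is_linear_preimage
    ⟨fun A B => Matrix.add_hadamard C A B, fun c A => Matrix.smul_hadamard A C c⟩

end SchurNorm

section TraceNorm

open scoped InnerProductSpace
open Module

variable {𝕜 E F : Type*} [RCLike 𝕜]
  [NormedAddCommGroup E] [InnerProductSpace 𝕜 E] [FiniteDimensional 𝕜 E]
  [NormedAddCommGroup F] [InnerProductSpace 𝕜 F] [FiniteDimensional 𝕜 F]

theorem norm_apply_eigenvectorBasis_adjoint_comp_self (T : E →ₗ[𝕜] F) (i : Fin (finrank 𝕜 E)) :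
    ‖T (T.isSymmetric_adjoint_comp_self.eigenvectorBasis rfl i)‖ = T.singularValues i := by
  refine (sq_eq_sq₀ (norm_nonneg _) (T.singularValues_nonneg i)).1 ?_
  have hsymm := T.isSymmetric_adjoint_comp_self
  have heigen : (LinearMap.adjoint T) (T (hsymm.eigenvectorBasis rfl i))
      = (hsymm.eigenvalues rfl i : 𝕜) • hsymm.eigenvectorBasis rfl i :=
    hsymm.apply_eigenvectorBasis rfl i
  rw [← inner_self_eq_norm_sq (𝕜 := 𝕜), ← LinearMap.adjoint_inner_left, heigen, inner_smul_left,
    T.sq_singularValues_fin rfl]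
  simp

theorem norm_trace_comp_le (S : F →L[𝕜] E) (T : E →ₗ[𝕜] F) :
    ‖LinearMap.trace 𝕜 E (S ∘ₗ T)‖ ≤ ‖S‖ * ∑ i : Fin (finrank 𝕜 E), T.singularValues i := by
  set b := T.isSymmetric_adjoint_comp_self.eigenvectorBasis rfl
  rw [LinearMap.trace_eq_sum_inner _ b, Finset.mul_sum]
  refine (norm_sum_le _ _).trans (Finset.sum_le_sum fun i _ => ?_)
  calc ‖⟪b i, S (T (b i))⟫_𝕜‖ ≤ ‖b i‖ * ‖S (T (b i))‖ := norm_inner_le_norm _ _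
    _ = ‖S (T (b i))‖ := by simp
    _ ≤ ‖S‖ * ‖T (b i)‖ := S.le_opNorm _
    _ = ‖S‖ * T.singularValues i := by rw [norm_apply_eigenvectorBasis_adjoint_comp_self]

theorem sum_sq_singularValues {ι : Type*} [Fintype ι] (T : E →ₗ[𝕜] F)
    (b : OrthonormalBasis ι 𝕜 E) :
    ∑ i : Fin (finrank 𝕜 E), T.singularValues i ^ 2 = ∑ i, ‖T (b i)‖ ^ 2 := by
  have htrace := LinearMap.trace_eq_sum_inner (LinearMap.adjoint T ∘ₗ T) b
  rw [T.isSymmetric_adjoint_comp_self.trace_eq_sum_eigenvalues rfl] at htrace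
  simp only [T.sq_singularValues_fin rfl]
  simp only [LinearMap.comp_apply, LinearMap.adjoint_inner_right, inner_self_eq_norm_sq_to_K]
    at htrace
  exact_mod_cast htrace

theorem prod_singularValues (T : E →ₗ[𝕜] E) :
    ∏ i : Fin (finrank 𝕜 E), T.singularValues i = ‖LinearMap.det T‖ := by
  rw [← LinearMap.normDet_eq_norm_det, LinearMap.normDet_eq_prod_singularValues,
    Finset.prod_range]

end TraceNorm

section HermiteLog

/-- The quadratic polynomial in `s` that agrees with `Real.log` at `1` and, to first order, at `r`,
in Newton's form. On `[1, ∞)` it bounds `Real.log` from below. -/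
noncomputable def logHermite (r s : ℝ) : ℝ :=
  (s - 1) * (Real.log r / (r - 1) + (r⁻¹ - Real.log r / (r - 1)) / (r - 1) * (s - r))

variable {r s : ℝ}

theorem exists_hasDerivAt_log_sub_logHermite (hr : 1 < r) : ∃ ρ ∈ Set.Ioo 1 r, ∃ c > 0, ∀ s > 0,
    HasDerivAt (fun s => Real.log s - logHermite r s) (c * ((s - ρ) * (s - r)) / s) s := by
  set a := Real.log r / (r - 1)
  set b := (r⁻¹ - a) / (r - 1) with hb
  have hr1 : r - 1 ≠ 0 := by linarith
  have ha : a = r⁻¹ - b * (r - 1) := by rw [hb]; field_simp; ring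
  have hderiv : ∀ s > 0, HasDerivAt (fun s => Real.log s - logHermite r s)
      ((s - r) * (-2 * b * s - r⁻¹) / s) s := fun s hs => by
    have h := (Real.hasDerivAt_log hs.ne').sub <| ((hasDerivAt_id s).sub_const 1).mul <|
      (((hasDerivAt_id s).sub_const r).const_mul b).const_add a
    refine h.congr_deriv ?_
    simp only [id_eq]
    rw [ha]
    field_simp
    ring
  obtain ⟨ρ, hρ, hzero⟩ := exists_hasDerivAt_eq_zero hr
    (fun s hs => (hderiv s (zero_lt_one.trans_le hs.1)).continuousAt.continuousWithinAt)
    (by simp [logHermite, mul_div_cancel₀ _ hr1]) fun s hs => hderiv s (zero_lt_one.trans hs.1)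
  have hρ0 : 0 < ρ := zero_lt_one.trans hρ.1
  have hbρ : -2 * b * ρ = r⁻¹ := by
    rcases div_eq_zero_iff.1 hzero with h | h
    · rcases mul_eq_zero.1 h with h | h <;> [exact absurd hρ.2 (by linarith); linarith]
    · exact absurd h hρ0.ne'
  refine ⟨ρ, hρ, -2 * b, ?_, fun s hs => (hderiv s hs).congr_deriv ?_⟩
  · exact pos_of_mul_pos_left (hbρ ▸ by positivity) hρ0.le
  · rw [← hbρ]; ring

theorem exists_monotoneOn_log_sub_logHermite (hr : 1 < r) : ∃ ρ ∈ Set.Ioo 1 r,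
    MonotoneOn (fun s => Real.log s - logHermite r s) (Set.Icc 1 ρ) ∧
      AntitoneOn (fun s => Real.log s - logHermite r s) (Set.Icc ρ r) ∧
        MonotoneOn (fun s => Real.log s - logHermite r s) (Set.Ici r) := by
  obtain ⟨ρ, hρ, c, hc, hderiv⟩ := exists_hasDerivAt_log_sub_logHermite hr
  have hcont : ∀ D ⊆ Set.Ici (1 : ℝ), ContinuousOn (fun s => Real.log s - logHermite r s) D :=
    fun D hD s hs => (hderiv s (zero_lt_one.trans_le (hD hs))).continuousAt.continuousWithinAt
  have hderivWithin : ∀ D ⊆ Set.Ici (1 : ℝ), ∀ s ∈ interior D,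
      HasDerivWithinAt (fun s => Real.log s - logHermite r s) (c * ((s - ρ) * (s - r)) / s)
        (interior D) s := fun D hD s hs =>
    (hderiv s (zero_lt_one.trans_le (hD (interior_subset hs)))).hasDerivWithinAt
  have h1 : Set.Icc 1 ρ ⊆ Set.Ici (1 : ℝ) := fun s hs => hs.1
  have h2 : Set.Icc ρ r ⊆ Set.Ici (1 : ℝ) := fun s hs => hρ.1.le.trans hs.1
  have h3 : Set.Ici r ⊆ Set.Ici (1 : ℝ) := fun s hs => hr.le.trans hs
  refine ⟨ρ, hρ,
    monotoneOn_of_hasDerivWithinAt_nonneg (convex_Icc _ _) (hcont _ h1) (hderivWithin _ h1)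
      fun s hs => ?_,
    antitoneOn_of_hasDerivWithinAt_nonpos (convex_Icc _ _) (hcont _ h2) (hderivWithin _ h2)
      fun s hs => ?_,
    monotoneOn_of_hasDerivWithinAt_nonneg (convex_Ici _) (hcont _ h3) (hderivWithin _ h3)
      fun s hs => ?_⟩
  · rw [interior_Icc] at hs
    exact div_nonneg (mul_nonneg hc.le (mul_nonneg_of_nonpos_of_nonpos (sub_nonpos.2 hs.2.le)
      (sub_nonpos.2 (hs.2.trans hρ.2).le))) (zero_lt_one.trans hs.1).le
  · rw [interior_Icc] at hs
    exact div_nonpos_of_nonpos_of_nonneg (mul_nonpos_of_nonneg_of_nonpos hc.le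
      (mul_nonpos_of_nonneg_of_nonpos (sub_nonneg.2 hs.1.le) (sub_nonpos.2 hs.2.le)))
      (zero_lt_one.trans (hρ.1.trans hs.1)).le
  · rw [interior_Ici] at hs
    exact div_nonneg (mul_nonneg hc.le (mul_nonneg (sub_nonneg.2 (hρ.2.trans hs).le)
      (sub_nonneg.2 hs.le))) (zero_lt_one.trans (hr.trans hs)).le

theorem logHermite_le_log (hr : 1 < r) (hs : 1 ≤ s) : logHermite r s ≤ Real.log s := by
  obtain ⟨ρ, ⟨h1ρ, hρr⟩, hmono, hanti, hmono'⟩ := exists_monotoneOn_log_sub_logHermite hr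
  have hF1 : Real.log 1 - logHermite r 1 = 0 := by simp [logHermite]
  have hFr : Real.log r - logHermite r r = 0 := by
    simp [logHermite, mul_div_cancel₀ _ (sub_pos.2 hr).ne']
  rw [← sub_nonneg]
  rcases le_total s ρ with hsρ | hρs
  · exact hF1 ▸ hmono ⟨le_rfl, h1ρ.le⟩ ⟨hs, hsρ⟩ hs
  rcases le_total s r with hsr | hrs
  · exact hFr ▸ hanti ⟨hρs, hsr⟩ ⟨hρr.le, le_rfl⟩ hsr
  · exact hFr ▸ hmono' Set.self_mem_Ici hrs hrs

end HermiteLog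

section ScalarInequality

variable {ι : Type*} [Fintype ι] {s : ι → ℝ} {r : ℝ} {k : ℕ}

theorem sum_le_of_exists_le_one (hk : Fintype.card ι = k + 1) (hr : 1 < r)
    (hsq : ∑ i, s i ^ 2 ≤ 1 + k * r ^ 2) (h : ∃ i, s i ≤ 1) : ∑ i, s i ≤ 1 + k * r := by
  classical
  obtain ⟨i, hi⟩ := h
  -- AM-GM `2 * r * x ≤ x ^ 2 + r ^ 2`, which is not tight for the index `i` with `s i ≤ 1`
  have hbound : ∀ j, 2 * r * s j ≤ s j ^ 2 + Function.update (fun _ => r ^ 2) i (2 * r - 1) j := by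
    intro j
    rcases eq_or_ne j i with rfl | hj
    · rw [Function.update_self]
      nlinarith
    · rw [Function.update_of_ne hj]
      nlinarith [sq_nonneg (s j - r)]
  have hsum := Finset.sum_le_sum fun j (_ : j ∈ Finset.univ) => hbound j
  rw [← Finset.mul_sum, Finset.sum_add_distrib, Finset.sum_update_of_mem (Finset.mem_univ i)]
    at hsum
  simp only [Finset.sum_const, Finset.card_sdiff, Finset.card_univ, hk, Finset.inter_univ,
    Finset.card_singleton, add_tsub_cancel_right, nsmul_eq_mul] at hsum
  nlinarith

theorem sum_le_of_forall_one_le (hk : Fintype.card ι = k + 1) (hr : 1 < r)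
    (hsq : ∑ i, s i ^ 2 ≤ 1 + k * r ^ 2) (hprod : ∏ i, s i ≤ r ^ k) (h : ∀ i, 1 ≤ s i) :
    ∑ i, s i ≤ 1 + k * r := by
  set a := Real.log r / (r - 1) with ha
  set b := (r⁻¹ - a) / (r - 1)
  have hr1 : 0 < r - 1 := sub_pos.2 hr
  have hlogr : a * (r - 1) = Real.log r := div_mul_cancel₀ _ hr1.ne'
  have ha0 : 0 < a := div_pos (Real.log_pos hr) hr1
  have hb0 : b ≤ 0 := by
    refine div_nonpos_of_nonpos_of_nonneg (sub_nonpos.2 ?_) hr1.le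
    rw [ha, le_div_iff₀ hr1]
    calc r⁻¹ * (r - 1) = 1 - r⁻¹ := by field_simp
      _ ≤ Real.log r := Real.one_sub_inv_le_log_of_pos (zero_lt_one.trans hr)
  have hlog : ∑ i, logHermite r (s i) ≤ k * (a * (r - 1)) :=
    calc ∑ i, logHermite r (s i) ≤ ∑ i, Real.log (s i) :=
          Finset.sum_le_sum fun i _ => logHermite_le_log hr (h i)
      _ = Real.log (∏ i, s i) :=
          (Real.log_prod fun i _ => (zero_lt_one.trans_le (h i)).ne').symm
      _ ≤ Real.log (r ^ k) := Real.log_le_log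
          (Finset.prod_pos fun i _ => zero_lt_one.trans_le (h i)) hprod
      _ = k * (a * (r - 1)) := by rw [Real.log_pow, hlogr]
  have hexpand : ∑ i, logHermite r (s i) =
      b * ∑ i, s i ^ 2 + (a - b * (1 + r)) * ∑ i, s i + (k + 1) * (b * r - a) := by
    have : ∀ x, logHermite r x = b * x ^ 2 + (a - b * (1 + r)) * x + (b * r - a) := fun x => by
      simp only [logHermite]; ring
    simp [this, Finset.sum_add_distrib, Finset.mul_sum, hk]
    ring
  have hcoeff : 0 < a - b * (1 + r) := by nlinarith
  refine le_of_mul_le_mul_left ?_ hcoeff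
  nlinarith [mul_le_mul_of_nonpos_left hsq hb0]

theorem sum_le_of_sum_sq_le_of_prod_le (hk : Fintype.card ι = k + 1) (hr : 1 < r)
    (hsq : ∑ i, s i ^ 2 ≤ 1 + k * r ^ 2) (hprod : ∏ i, s i ≤ r ^ k) : ∑ i, s i ≤ 1 + k * r := by
  by_cases h : ∃ i, s i ≤ 1
  · exact sum_le_of_exists_le_one hk hr hsq h
  · push Not at h
    exact sum_le_of_forall_one_le hk hr hsq hprod fun i => (h i).le

end ScalarInequality

section DeterminantCriterion

open scoped Matrix.Norms.L2Operator Matrix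

variable {n : Type*} [Fintype n]

theorem prod_le_arith_mean_pow_card {ι : Type*} [Fintype ι] [Nonempty ι] {z : ι → ℝ}
    (hz : ∀ i, 0 ≤ z i) : ∏ i, z i ≤ ((∑ i, z i) / Fintype.card ι) ^ Fintype.card ι := by
  have h := Real.geom_mean_le_arith_mean Finset.univ (fun _ => 1) z (fun _ _ => zero_le_one)
    (by simp [Fintype.card_pos]) fun i _ => hz i
  simp only [Real.rpow_one, Finset.sum_const, Finset.card_univ, nsmul_eq_mul, mul_one,
    one_mul] at h
  exact (Real.rpow_inv_le_iff_of_pos (Finset.prod_nonneg fun i _ => hz i)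
    (div_nonneg (Finset.sum_nonneg fun i _ => hz i) (Nat.cast_nonneg _))
      (by positivity)).1 h |>.trans_eq (Real.rpow_natCast _ _)

theorem prod_norm_sq_le_of_norm_eq_one [Nonempty n] {u : EuclideanSpace ℂ n} (hu : ‖u‖ = 1) :
    (∏ i, ‖u i‖) ^ 2 ≤ ((Fintype.card n : ℝ)⁻¹) ^ Fintype.card n := by
  rw [← Finset.prod_pow]
  refine (prod_le_arith_mean_pow_card fun i => sq_nonneg ‖u i‖).trans_eq ?_
  rw [← EuclideanSpace.norm_sq_eq, hu, one_pow, one_div]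

variable [DecidableEq n]

theorem norm_trace_mul_le (C B : Matrix n n ℂ) : ‖(C * B).trace‖ ≤
    ‖C‖ * ∑ i : Fin (Module.finrank ℂ (EuclideanSpace ℂ n)),
      (Matrix.toEuclideanLin B).singularValues i := by
  have h := norm_trace_comp_le (LinearMap.toContinuousLinearMap (Matrix.toEuclideanLin C))
    (Matrix.toEuclideanLin B)
  rw [← copNorm_eq_norm]
  refine le_of_eq_of_le ?_ h
  rw [LinearMap.coe_toContinuousLinearMap, ← Matrix.toLpLin_mul_same,
    Matrix.toLpLin_eq_toLin, Matrix.trace_toLin_eq]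

theorem sum_sq_singularValues_toEuclideanLin (B : Matrix n n ℂ) :
    ∑ i : Fin (Module.finrank ℂ (EuclideanSpace ℂ n)),
      (Matrix.toEuclideanLin B).singularValues i ^ 2 = ∑ j, ∑ i, ‖B i j‖ ^ 2 := by
  rw [sum_sq_singularValues _ (EuclideanSpace.basisFun n ℂ)]
  simp [EuclideanSpace.norm_sq_eq, Matrix.toLpLin_apply]

theorem prod_singularValues_toEuclideanLin (B : Matrix n n ℂ) :
    ∏ i : Fin (Module.finrank ℂ (EuclideanSpace ℂ n)),
      (Matrix.toEuclideanLin B).singularValues i = ‖B.det‖ := by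
  rw [prod_singularValues, Matrix.toEuclideanLin_eq_toLin_orthonormal, LinearMap.det_toLin]

theorem vecMul_hadamard_dotProduct (M C : Matrix n n ℂ) (u v : n → ℂ) :
    u ᵥ* (M ⊙ C) ⬝ᵥ v =
      (C * ((Matrix.diagonal u * M * Matrix.diagonal v)ᵀ)).trace := by
  rw [Matrix.hadamard_comm, Matrix.dotProduct_vecMul_hadamard, Matrix.mul_assoc,
    Matrix.trace_mul_comm, Matrix.mul_assoc, Matrix.transpose_mul, Matrix.transpose_mul,
    Matrix.transpose_mul, Matrix.diagonal_transpose, Matrix.diagonal_transpose, Matrix.mul_assoc]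

theorem sum_norm_sq_diagonal_mul_mul_diagonal_le {M : Matrix n n ℂ} (hM : ∀ i j, ‖M i j‖ ≤ 1)
    {u v : EuclideanSpace ℂ n} (hu : ‖u‖ = 1) (hv : ‖v‖ = 1) :
    ∑ i, ∑ j, ‖(Matrix.diagonal u.ofLp * M * Matrix.diagonal v.ofLp) i j‖ ^ 2 ≤ 1 := by
  calc _ ≤ ∑ i, ∑ j, ‖u i‖ ^ 2 * ‖v j‖ ^ 2 := by
        refine Finset.sum_le_sum fun i _ => Finset.sum_le_sum fun j _ => ?_
        rw [Matrix.mul_diagonal, Matrix.diagonal_mul, norm_mul, norm_mul, mul_pow, mul_pow]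
        gcongr
        exact mul_le_of_le_one_right (by positivity) (pow_le_one₀ (norm_nonneg _) (hM i j))
    _ = 1 := by
        rw [← Finset.sum_mul_sum, ← EuclideanSpace.norm_sq_eq, ← EuclideanSpace.norm_sq_eq, hu, hv]
        norm_num

theorem norm_det_diagonal_mul_mul_diagonal_le [Nonempty n] (M : Matrix n n ℂ)
    {u v : EuclideanSpace ℂ n} (hu : ‖u‖ = 1) (hv : ‖v‖ = 1) :
    ‖(Matrix.diagonal u.ofLp * M * Matrix.diagonal v.ofLp).det‖ ≤
      ((Fintype.card n : ℝ)⁻¹) ^ Fintype.card n * ‖M.det‖ := by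
  have h1 := prod_norm_sq_le_of_norm_eq_one hu
  have h2 := prod_norm_sq_le_of_norm_eq_one hv
  calc _ = (∏ i, ‖u i‖) * (∏ i, ‖v i‖) * ‖M.det‖ := by
        simp only [Matrix.det_mul, Matrix.det_diagonal, norm_mul, norm_prod]
        ring
    _ ≤ _ := by
        gcongr
        nlinarith [sq_nonneg ((∏ i, ‖u i‖) - ∏ i, ‖v i‖)]

theorem schurNorm_le_of_norm_det_le {k : ℕ} (hk : Fintype.card n = k + 1) {M : Matrix n n ℂ}
    (hM : ∀ i j, ‖M i j‖ ≤ 1) (hdet : ‖M.det‖ ≤ √(k + 2) ^ k) :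
    M.schurNorm ≤ (1 + k * √(k + 2)) / (k + 1) := by
  have : Nonempty n := Fintype.card_pos_iff.1 (by omega)
  have hk1 : (0 : ℝ) < k + 1 := by positivity
  have hr : √(k + 2 : ℝ) ^ 2 = k + 2 := Real.sq_sqrt (by positivity)
  have hr1 : 1 < √(k + 2 : ℝ) := Real.lt_sqrt_of_sq_lt (by linarith)
  refine schurNorm_le_iff.2 fun C hC =>
    norm_le_of_norm_vecMul_dotProduct_le (by positivity) fun u v hu hv => ?_
  set B := (Matrix.diagonal u.ofLp * M * Matrix.diagonal v.ofLp)ᵀ with hB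
  set σ := fun i : Fin (Module.finrank ℂ (EuclideanSpace ℂ n)) =>
    (Matrix.toEuclideanLin B).singularValues i
  have hsq : ∑ i, σ i ^ 2 ≤ 1 := (sum_sq_singularValues_toEuclideanLin B).trans_le
    (sum_norm_sq_diagonal_mul_mul_diagonal_le hM hu hv)
  have hprod : ∏ i, σ i ≤ ((k + 1 : ℝ)⁻¹) ^ (k + 1) * √(k + 2) ^ k :=
    calc ∏ i, σ i = ‖(Matrix.diagonal u.ofLp * M * Matrix.diagonal v.ofLp).det‖ := by
          rw [prod_singularValues_toEuclideanLin, hB, Matrix.det_transpose]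
      _ ≤ ((k + 1 : ℝ)⁻¹) ^ (k + 1) * ‖M.det‖ := by
          simpa [hk] using norm_det_diagonal_mul_mul_diagonal_le M hu hv
      _ ≤ _ := by gcongr
  have hsum : ∑ i, (k + 1) * σ i ≤ 1 + k * √(k + 2) := by
    refine sum_le_of_sum_sq_le_of_prod_le (by simp [hk]) hr1 ?_ ?_
    · simp only [mul_pow, ← Finset.mul_sum, hr]
      nlinarith
    · simp only [Finset.prod_mul_distrib, Finset.prod_const, Finset.card_univ, Fintype.card_fin,
        finrank_euclideanSpace, hk]
      refine (mul_le_mul_of_nonneg_left hprod (by positivity)).trans_eq ?_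
      rw [← mul_assoc, ← mul_pow, mul_inv_cancel₀ hk1.ne', one_pow, one_mul]
  have hσ : 0 ≤ ∑ i, σ i := Finset.sum_nonneg fun i _ => LinearMap.singularValues_nonneg _ _
  rw [vecMul_hadamard_dotProduct, le_div_iff₀ hk1]
  calc ‖(C * B).trace‖ * (k + 1) ≤ (1 * ∑ i, σ i) * (k + 1) := by
        gcongr
        exact (norm_trace_mul_le C B).trans (by gcongr)
    _ = ∑ i, (k + 1) * σ i := by rw [one_mul, mul_comm, Finset.mul_sum]
    _ ≤ _ := hsum

end DeterminantCriterion

section Factorization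

open scoped Matrix.Norms.L2Operator Matrix

variable {n ι : Type*} [Fintype n] [Fintype ι]

theorem vecMul_mul_hadamard_dotProduct (A : Matrix n ι ℂ) (B : Matrix ι n ℂ) (C : Matrix n n ℂ)
    (u v : n → ℂ) : u ᵥ* ((A * B) ⊙ C) ⬝ᵥ v =
      ∑ l, (fun i => u i * A i l) ᵥ* C ⬝ᵥ (fun j => B l j * v j) := by
  simp only [dotProduct, Matrix.vecMul, Matrix.hadamard_apply, Matrix.mul_apply]
  rw [Finset.sum_comm]
  refine Finset.sum_congr rfl fun j _ => ?_
  simp only [Finset.mul_sum, Finset.sum_mul]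
  rw [Finset.sum_comm]
  exact Finset.sum_congr rfl fun l _ => Finset.sum_congr rfl fun i _ => by ring

variable [DecidableEq n]

theorem schurNorm_diagonal_mul_le {s : n → ℂ} (hs : ∀ i, ‖s i‖ ≤ 1) (M : Matrix n n ℂ) :
    (Matrix.diagonal s * M).schurNorm ≤ M.schurNorm := by
  refine schurNorm_le_iff.2 fun C hC => ?_
  have hcomm : (Matrix.diagonal s * M) ⊙ C = Matrix.diagonal s * (M ⊙ C) := by
    ext i j
    simp [mul_assoc]
  calc ‖(Matrix.diagonal s * M) ⊙ C‖ ≤ ‖Matrix.diagonal s‖ * ‖M ⊙ C‖ := by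
        rw [hcomm]; exact Matrix.l2_opNorm_mul _ _
    _ ≤ 1 * ‖M ⊙ C‖ := by
        gcongr
        rw [Matrix.l2_opNorm_diagonal]
        exact (pi_norm_le_iff_of_nonneg zero_le_one).2 hs
    _ ≤ M.schurNorm := by rw [one_mul]; exact norm_hadamard_le_schurNorm M hC

theorem norm_submatrix_perm_le (e : Equiv.Perm n) (M : Matrix n n ℂ) :
    ‖M.submatrix e id‖ ≤ ‖M‖ := by
  have hmul : M.submatrix e id = Equiv.Perm.permMatrix ℂ e * M :=
    (PEquiv.toMatrix_toPEquiv_mul e M).symm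
  rw [hmul]
  exact (Matrix.l2_opNorm_mul _ _).trans
    (mul_le_of_le_one_left (norm_nonneg _) (Matrix.permMatrix_l2_opNorm_le e))

theorem schurNorm_submatrix_perm_le (e : Equiv.Perm n) (M : Matrix n n ℂ) :
    (M.submatrix e id).schurNorm ≤ M.schurNorm := by
  refine schurNorm_le_iff.2 fun C hC => ?_
  have hcomm : M.submatrix e id ⊙ C = (M ⊙ C.submatrix e.symm id).submatrix e id := by
    ext i j
    simp
  rw [hcomm]
  exact (norm_submatrix_perm_le e _).trans
    (norm_hadamard_le_schurNorm M ((norm_submatrix_perm_le e.symm C).trans hC))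

theorem schurNorm_mul_le {A : Matrix n ι ℂ} {B : Matrix ι n ℂ} {α β : ℝ}
    (hα : ∀ i, ∑ l, ‖A i l‖ ^ 2 ≤ α) (hβ : ∀ j, ∑ l, ‖B l j‖ ^ 2 ≤ β) :
    (A * B).schurNorm ≤ √α * √β := by
  refine schurNorm_le_iff.2 fun C hC =>
    norm_le_of_norm_vecMul_dotProduct_le (by positivity) fun u v hu hv => ?_
  set a : ι → EuclideanSpace ℂ n := fun l => WithLp.toLp 2 fun i => u i * A i l
  set b : ι → EuclideanSpace ℂ n := fun l => WithLp.toLp 2 fun j => B l j * v j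
  have ha : ∑ l, ‖a l‖ ^ 2 ≤ α := by
    calc ∑ l, ‖a l‖ ^ 2 = ∑ i, ‖u i‖ ^ 2 * ∑ l, ‖A i l‖ ^ 2 := by
          simp only [a, EuclideanSpace.norm_sq_eq, norm_mul, mul_pow, Finset.mul_sum]
          exact Finset.sum_comm
      _ ≤ ∑ i, ‖u i‖ ^ 2 * α := by gcongr with i; exact hα i
      _ = α := by rw [← Finset.sum_mul, ← EuclideanSpace.norm_sq_eq, hu, one_pow, one_mul]
  have hb : ∑ l, ‖b l‖ ^ 2 ≤ β := by
    calc ∑ l, ‖b l‖ ^ 2 = ∑ j, (∑ l, ‖B l j‖ ^ 2) * ‖v j‖ ^ 2 := by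
          simp only [b, EuclideanSpace.norm_sq_eq, norm_mul, mul_pow, Finset.sum_mul]
          exact Finset.sum_comm
      _ ≤ ∑ j, β * ‖v j‖ ^ 2 := by gcongr with j; exact hβ j
      _ = β := by rw [← Finset.mul_sum, ← EuclideanSpace.norm_sq_eq, hv, one_pow, mul_one]
  rw [vecMul_mul_hadamard_dotProduct]
  calc ‖∑ l, (a l).ofLp ᵥ* C ⬝ᵥ (b l).ofLp‖ ≤ ∑ l, ‖a l‖ * ‖b l‖ := by
        refine (norm_sum_le _ _).trans (Finset.sum_le_sum fun l _ => ?_)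
        exact (norm_vecMul_dotProduct_le C (a l) (b l)).trans
          (mul_le_of_le_one_left (by positivity) hC)
    _ ≤ √(∑ l, ‖a l‖ ^ 2) * √(∑ l, ‖b l‖ ^ 2) :=
        Real.sum_mul_le_sqrt_mul_sqrt Finset.univ (fun l => ‖a l‖) fun l => ‖b l‖
    _ ≤ √α * √β := mul_le_mul (Real.sqrt_le_sqrt ha) (Real.sqrt_le_sqrt hb) (Real.sqrt_nonneg _)
        (Real.sqrt_nonneg _)

-- The factorization is `M = [(1 - T) * M, T * d ^ (-1/2)] * [1; d ^ (1/2) * M]`.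
theorem schurNorm_le_of_interpolation {M : Matrix n n ℝ} (hM : ∀ i j, |M i j| ≤ 1)
    (T : Matrix n n ℝ) {d : n → ℝ} (hd : ∀ k, 0 < d k) {α : ℝ}
    (hα : ∀ i, ((1 - T) * (M * Mᵀ) * (1 - T)ᵀ : Matrix n n ℝ) i i + ∑ k, T i k ^ 2 / d k ≤ α) :
    (M.map Complex.ofReal).schurNorm ≤ √α * √(1 + ∑ k, d k) := by
  set A : Matrix n (n ⊕ n) ℝ :=
    Matrix.fromCols ((1 - T) * M) (T * Matrix.diagonal fun k => (√(d k))⁻¹) with hA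
  set B : Matrix (n ⊕ n) n ℝ :=
    Matrix.fromRows 1 ((Matrix.diagonal fun k => √(d k)) * M) with hB
  have hd' : ∀ k, √(d k) ≠ 0 := fun k => (Real.sqrt_pos.2 (hd k)).ne'
  have hmul : A * B = M := by
    rw [hA, hB, Matrix.fromCols_mul_fromRows, Matrix.mul_one, Matrix.mul_assoc T,
      ← Matrix.mul_assoc (Matrix.diagonal _), Matrix.diagonal_mul_diagonal]
    simp [hd', Matrix.sub_mul]
  have hrow : ∀ i, ∑ l, ‖A.map Complex.ofReal i l‖ ^ 2 ≤ α := fun i => by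
    refine le_of_eq_of_le ?_ (hα i)
    have hdiag : ∑ j, ((1 - T) * M) i j ^ 2 =
        ((1 - T) * (M * Mᵀ) * (1 - T)ᵀ : Matrix n n ℝ) i i := by
      rw [← Matrix.mul_assoc, Matrix.mul_assoc, ← Matrix.transpose_mul, Matrix.mul_apply]
      simp only [Matrix.transpose_apply, sq]
    simp [A, hdiag, mul_pow, (hd _).le, div_eq_mul_inv]
  have hcol : ∀ j, ∑ l, ‖B.map Complex.ofReal l j‖ ^ 2 ≤ 1 + ∑ k, d k := fun j => by
    have hone : ∑ i, ((1 : Matrix n n ℝ) i j) ^ 2 = 1 := by simp [Matrix.one_apply]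
    simp only [B, Matrix.map_apply, Complex.norm_real, Real.norm_eq_abs, sq_abs,
      Fintype.sum_sum_type, Matrix.fromRows_apply_inl, hone, Matrix.fromRows_apply_inr,
      Matrix.diagonal_mul, mul_pow, (hd _).le, Real.sq_sqrt]
    gcongr with k
    exact mul_le_of_le_one_right (hd k).le (sq_le_one_iff_abs_le_one _ |>.2 (hM k j))
  have hmap : M.map Complex.ofReal = A.map Complex.ofReal * B.map Complex.ofReal := by
    rw [← hmul]; exact Matrix.map_mul (f := Complex.ofRealHom)
  rw [hmap]
  exact schurNorm_mul_le hrow hcol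

end Factorization

section SignMatrix

open scoped Matrix

theorem det_le_trace_div_card_pow {n : Type*} [Fintype n] [DecidableEq n] [Nonempty n]
    {G : Matrix n n ℝ} (hG : G.PosSemidef) :
    G.det ≤ (G.trace / Fintype.card n) ^ Fintype.card n := by
  rw [hG.isHermitian.det_eq_prod_eigenvalues, hG.isHermitian.trace_eq_sum_eigenvalues]
  exact prod_le_arith_mean_pow_card hG.eigenvalues_nonneg

theorem posSemidef_map_mul_transpose {m n : Type*} [Finite m] [Fintype n] (M : Matrix m n ℤ) :
    ((M * Mᵀ).map (Int.cast : ℤ → ℝ)).PosSemidef := by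
  have hmap : (M * Mᵀ).map (Int.cast : ℤ → ℝ) = M.map Int.cast * (M.map Int.cast)ᴴ := by
    rw [Matrix.conjTranspose_eq_transpose_of_trivial, ← Matrix.transpose_map]
    exact Matrix.map_mul (f := Int.castRingHom ℝ)
  exact hmap ▸ Matrix.posSemidef_self_mul_conjTranspose _

/-- A sign matrix is an integer matrix all of whose entries are `1` or `-1`. -/
def IsSignMatrix {m n : Type*} (M : Matrix m n ℤ) : Prop := ∀ i j, M i j = 1 ∨ M i j = -1

namespace IsSignMatrix

variable {m n : Type*} {M : Matrix m n ℤ}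

theorem mul_self_eq_one (hM : IsSignMatrix M) (i : m) (j : n) : M i j * M i j = 1 := by
  rcases hM i j with h | h <;> simp [h]

theorem odd (hM : IsSignMatrix M) (i : m) (j : n) : Odd (M i j) := by
  rcases hM i j with h | h <;> simp [h]

variable [Fintype n]

theorem mul_transpose_diag (hM : IsSignMatrix M) (i : m) : (M * Mᵀ) i i = Fintype.card n := by
  simp [Matrix.mul_apply, hM.mul_self_eq_one]

theorem det_sq_le [DecidableEq n] [Nonempty n] {M : Matrix n n ℤ} (hM : IsSignMatrix M) :
    M.det ^ 2 ≤ (Fintype.card n : ℤ) ^ Fintype.card n := by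
  have hdet := det_le_trace_div_card_pow (posSemidef_map_mul_transpose M)
  have htrace : ((M * Mᵀ).map (Int.cast : ℤ → ℝ)).trace = Fintype.card n * Fintype.card n := by
    simp [Matrix.trace, hM.mul_transpose_diag]
  have hcast : ((M * Mᵀ).map (Int.cast : ℤ → ℝ)).det = (M.det ^ 2 : ℤ) := by
    rw [← Int.cast_det, Matrix.det_mul, Matrix.det_transpose, sq]
  rw [htrace, hcast, mul_div_cancel_right₀ _ (by simp)] at hdet
  exact_mod_cast hdet

end IsSignMatrix

theorem two_pow_dvd_det {n : ℕ} {M : Matrix (Fin (n + 1)) (Fin (n + 1)) ℤ}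
    (hM : ∀ i j, Odd (M i j)) : 2 ^ n ∣ M.det := by
  choose q hq using fun i j => ((hM i j).sub_odd (hM 0 j)).two_dvd
  set N : Matrix (Fin (n + 1)) (Fin (n + 1)) ℤ :=
    Matrix.of (Fin.cons (M 0) fun i => q i.succ)
  set c : Fin (n + 1) → ℤ := Fin.cons 1 fun _ => 2
  have hdet : M.det = (Matrix.of fun i j => c i * N i j).det := by
    refine Matrix.det_eq_of_forall_row_eq_smul_add_const (Fin.cons 0 fun _ => 1) 0 rfl
      fun i j => ?_
    refine Fin.cases ?_ (fun i => ?_) i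
    · simp [c, N]
    · simp [c, N, ← hq]
  rw [hdet, Matrix.det_mul_column, Fin.prod_univ_succ]
  simp [c]

theorem sum_sub_one_modEq_prod_sub_one {ι : Type*} (s : Finset ι) {x : ι → ℤ}
    (hx : ∀ i, Odd (x i)) : ∑ i ∈ s, (x i - 1) ≡ ∏ i ∈ s, x i - 1 [ZMOD 4] := by
  classical
  induction s using Finset.induction_on with
  | empty => simp
  | insert a s ha ih =>
    rw [Finset.sum_insert ha, Finset.prod_insert ha]
    have hprod : Odd (∏ i ∈ s, x i) :=
      Finset.prod_induction _ Odd (fun _ _ => Odd.mul) odd_one fun i _ => hx i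
    have hdvd : (2 * 2 : ℤ) ∣ (x a - 1) * (∏ i ∈ s, x i - 1) :=
      mul_dvd_mul ((hx a).sub_odd odd_one).two_dvd (hprod.sub_odd odd_one).two_dvd
    calc _ ≡ x a - 1 + (∏ i ∈ s, x i - 1) [ZMOD 4] := ih.add_left _
      _ ≡ x a * ∏ i ∈ s, x i - 1 [ZMOD 4] := Int.modEq_iff_dvd.2 (by convert hdvd using 1 <;> ring)

theorem exists_forall_ne_eq_zero_of_sum_sq_lt {ι : Type*} [Fintype ι] [Nonempty ι] {w : ι → ℤ}
    (heven : ∀ j, Even (w j)) (hw : ∑ j, w j ^ 2 < 8) : ∃ j, ∀ l, l ≠ j → w l = 0 := by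
  classical
  by_contra! h
  obtain ⟨j, -, hj⟩ := h (Classical.arbitrary ι)
  obtain ⟨l, hlj, hl⟩ := h j
  have hfour : ∀ l, w l ≠ 0 → 4 ≤ w l ^ 2 := fun l hl => by
    have h2 : 2 ≤ |w l| := Int.le_of_dvd (abs_pos.2 hl) ((dvd_abs _ _).2 (heven l).two_dvd)
    rw [← sq_abs]
    nlinarith
  have := Finset.sum_le_univ_sum_of_nonneg (s := {j, l}) fun l =>
    sq_nonneg (w l)
  rw [Finset.sum_pair hlj.symm] at this
  linarith [hfour j hj, hfour l hl]

namespace IsSignMatrix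

theorem exists_row_sub_smul_row_eq_zero {m n : Type*} [Fintype n] [Nonempty n] {M : Matrix m n ℤ}
    (hM : IsSignMatrix M) {i k : m} (h : Fintype.card n - 4 < |(M * Mᵀ) i k|) :
    ∃ σ : ℤ, (σ = 1 ∨ σ = -1) ∧ ∃ j, ∀ l, l ≠ j → M i l + σ * M k l = 0 := by
  obtain ⟨σ, hσ, hσabs⟩ : ∃ σ : ℤ, (σ = 1 ∨ σ = -1) ∧ |(M * Mᵀ) i k| = - σ * (M * Mᵀ) i k := by
    rcases abs_choice ((M * Mᵀ) i k) with h | h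
    exacts [⟨-1, .inr rfl, by simp [h]⟩, ⟨1, .inl rfl, by simp [h]⟩]
  have hσodd : Odd σ := by rcases hσ with h | h <;> simp [h]
  have hσsq : σ * σ = 1 := by rcases hσ with h | h <;> simp [h]
  refine ⟨σ, hσ, exists_forall_ne_eq_zero_of_sum_sq_lt
    (fun l => (hM.odd i l).add_odd (hσodd.mul (hM.odd k l))) ?_⟩
  have hexpand : ∑ l, (M i l + σ * M k l) ^ 2 = 2 * Fintype.card n + 2 * σ * (M * Mᵀ) i k := by
    have hterm : ∀ l, (M i l + σ * M k l) ^ 2 = 2 + 2 * σ * (M i l * M k l) := fun l => by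
      linear_combination hM.mul_self_eq_one i l + hM.mul_self_eq_one k l +
        M k l * M k l * hσsq
    simp only [hterm, Finset.sum_add_distrib, Matrix.mul_apply, Matrix.transpose_apply,
      ← Finset.mul_sum, Finset.sum_const, Finset.card_univ, nsmul_eq_mul]
    ring
  linarith

theorem det_sq_le_of_lt_abs_mul_transpose {n : ℕ} [NeZero n]
    {M : Matrix (Fin (n + 1)) (Fin (n + 1)) ℤ} (hM : IsSignMatrix M) {i k : Fin (n + 1)}
    (hik : i ≠ k) (h : (n : ℤ) - 3 < |(M * Mᵀ) i k|) : M.det ^ 2 ≤ 4 * (n : ℤ) ^ n := by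
  obtain ⟨σ, hσ, j, hzero⟩ :=
    hM.exists_row_sub_smul_row_eq_zero (i := i) (k := k) (by simp; linarith)
  set w := M i + σ • M k
  have hw : w j ^ 2 ≤ 4 := by
    rcases hσ with rfl | rfl <;> rcases hM i j with h | h <;> rcases hM k j with h' | h' <;>
      norm_num [w, h, h']
  have hdet : M.det = (-1) ^ (i + j : ℕ) * w j * (M.submatrix i.succAbove j.succAbove).det := by
    rw [← Matrix.det_updateRow_add_smul_self M hik σ, Matrix.det_succ_row _ i,
      Fintype.sum_eq_single j]
    · simp [w]
    · intro l hl
      simp [hzero l hl]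
  have hminor : (M.submatrix i.succAbove j.succAbove).det ^ 2 ≤ (n : ℤ) ^ n := by
    have : IsSignMatrix (M.submatrix i.succAbove j.succAbove) := fun _ _ => hM _ _
    simpa using this.det_sq_le
  rw [hdet, mul_pow, mul_pow, ← pow_mul, mul_comm _ 2, pow_mul, neg_one_sq, one_pow, one_mul]
  exact mul_le_mul hw hminor (sq_nonneg _) (by norm_num)

theorem mul_transpose_modEq_card {m n : Type*} [Fintype n] {M : Matrix m n ℤ}
    (hM : IsSignMatrix M) (hprod : ∀ i, ∏ j, M i j = 1) (i k : m) :
    (M * Mᵀ) i k ≡ Fintype.card n [ZMOD 4] := by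
  have h := sum_sub_one_modEq_prod_sub_one Finset.univ fun j => (hM.odd i j).mul (hM.odd k j)
  rw [Finset.prod_mul_distrib, hprod, hprod, Finset.sum_sub_distrib] at h
  simpa [Matrix.mul_apply] using h.add_right (Fintype.card n : ℤ)

end IsSignMatrix

end SignMatrix

section SchurComplement

open scoped Matrix

theorem trace_map_intCast {n : Type*} [Fintype n] (S : Matrix n n ℤ) :
    (S.map (Int.cast : ℤ → ℝ)).trace = S.trace :=
  (AddMonoidHom.map_trace (Int.castAddHom ℝ) S).symm

variable {m n R : Type*} [Fintype m] [DecidableEq m]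

theorem det_pow_card_mul_det_fromBlocks [Fintype n] [DecidableEq n] [CommRing R] (P : Matrix m m R)
    (B : Matrix m n R) (C : Matrix n m R) (D : Matrix n n R) :
    P.det ^ Fintype.card n * (Matrix.fromBlocks P B C D).det =
      P.det * (P.det • D - C * P.adjugate * B).det := by
  have hmul : Matrix.fromBlocks (1 : Matrix m m R) 0 (-(C * P.adjugate)) (P.det • 1) *
      Matrix.fromBlocks P B C D = Matrix.fromBlocks P B 0 (P.det • D - C * P.adjugate * B) := by
    rw [Matrix.fromBlocks_multiply]
    congr 1 <;> simp [Matrix.mul_assoc, Matrix.adjugate_mul, neg_add_eq_sub]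
  have hdet := congrArg Matrix.det hmul
  rwa [Matrix.det_mul, Matrix.det_fromBlocks_zero₁₂, Matrix.det_fromBlocks_zero₂₁, Matrix.det_smul,
    Matrix.det_one, Matrix.det_one, one_mul, mul_one] at hdet

theorem posSemidef_schurComplement [Finite n] {P : Matrix m m ℝ} {B : Matrix m n ℝ}
    {D : Matrix n n ℝ} (hP : 0 < P.det) (h : (Matrix.fromBlocks P B Bᵀ D).PosSemidef) :
    (P.det • D - Bᵀ * P.adjugate * B).PosSemidef := by
  classical
  cases nonempty_fintype n
  set X : Matrix n (m ⊕ n) ℝ := Matrix.fromCols (-(Bᵀ * P.adjugate)) (P.det • 1)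
  have hX : X * Matrix.fromBlocks P B Bᵀ D * Xᴴ = P.det • (P.det • D - Bᵀ * P.adjugate * B) := by
    rw [Matrix.conjTranspose_eq_transpose_of_trivial, Matrix.fromCols_mul_fromBlocks,
      Matrix.transpose_fromCols, Matrix.fromCols_mul_fromRows]
    simp [Matrix.mul_assoc, Matrix.adjugate_mul, neg_add_eq_sub]
  have hpsd := hX ▸ h.mul_mul_conjTranspose_same X
  have := hpsd.smul (inv_nonneg.2 hP.le)
  rwa [smul_smul, inv_mul_cancel₀ hP.ne', one_smul] at this

theorem card_pow_mul_det_le_trace_pow [Fintype n] [DecidableEq n] [Nonempty n] {S : Matrix n n ℤ}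
    (hS : (S.map (Int.cast : ℤ → ℝ)).PosSemidef) :
    (Fintype.card n : ℤ) ^ Fintype.card n * S.det ≤ S.trace ^ Fintype.card n := by
  have hdet := det_le_trace_div_card_pow hS
  rw [← Int.cast_det, trace_map_intCast, div_pow, le_div_iff₀ (by positivity), mul_comm] at hdet
  exact_mod_cast hdet

end SchurComplement

section ReducedGram

open scoped Matrix

/-- The Gram matrices that remain possible for a sign matrix of order `7` with large determinant,
once its rows have been signed: positive semidefinite, with `7` on the diagonal and `-1` or `3`
elsewhere. -/
structure IsReducedGram {n : Type*} (G : Matrix n n ℤ) : Prop where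
  posSemidef : (G.map (Int.cast : ℤ → ℝ)).PosSemidef
  diag : ∀ i, G i i = 7
  off_diag : ∀ i j, i ≠ j → G i j ∈ ({-1, 3} : Finset ℤ)

/-- The Schur complement of the upper left block `P` of an integer matrix, multiplied by `det P`
to keep it integral. For a Gram matrix it is positive semidefinite, so that its trace bounds its
determinant. -/
def intSchurComplement {m n : Type*} [Fintype m] [DecidableEq m] (G : Matrix (m ⊕ n) (m ⊕ n) ℤ) :
    Matrix n n ℤ :=
  G.toBlocks₁₁.det • G.toBlocks₂₂ - G.toBlocks₂₁ * G.toBlocks₁₁.adjugate * G.toBlocks₁₂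

theorem det_pow_mul_det_eq_det_intSchurComplement {m n : Type*} [Fintype m] [DecidableEq m]
    [Fintype n] [DecidableEq n] {G : Matrix (m ⊕ n) (m ⊕ n) ℤ} {k : ℕ}
    (hk : Fintype.card n = k + 1) (hP : G.toBlocks₁₁.det ≠ 0) :
    G.toBlocks₁₁.det ^ k * G.det = (intSchurComplement G).det := by
  have h := det_pow_card_mul_det_fromBlocks G.toBlocks₁₁ G.toBlocks₁₂ G.toBlocks₂₁ G.toBlocks₂₂
  rw [Matrix.fromBlocks_toBlocks, hk, pow_succ', mul_assoc] at h
  exact mul_left_cancel₀ hP h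

/-- The symmetric matrix of order `4` with diagonal `7` and upper triangle `x`, read row by row. It
turns statements about all reduced Gram matrices of order `4` into finite checks. -/
def reducedGramFour (x : Fin 6 → ℤ) : Matrix (Fin 4) (Fin 4) ℤ :=
  !![7, x 0, x 1, x 2; x 0, 7, x 3, x 4; x 1, x 3, 7, x 5; x 2, x 4, x 5, 7]

namespace IsReducedGram

variable {m n : Type*}

theorem apply_comm {G : Matrix n n ℤ} (hG : IsReducedGram G) (i j : n) : G i j = G j i := by
  have := hG.posSemidef.isHermitian.apply j i
  simpa using this

theorem submatrix {G : Matrix n n ℤ} (hG : IsReducedGram G) {f : m → n} (hf : f.Injective) :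
    IsReducedGram (G.submatrix f f) where
  posSemidef := hG.posSemidef.submatrix f
  diag i := hG.diag (f i)
  off_diag _ _ hij := hG.off_diag _ _ (hf.ne hij)

theorem exists_eq_reducedGramFour {D : Matrix (Fin 4) (Fin 4) ℤ} (hD : IsReducedGram D) :
    ∃ x ∈ Fintype.piFinset fun _ : Fin 6 => ({-1, 3} : Finset ℤ), D = reducedGramFour x := by
  refine ⟨![D 0 1, D 0 2, D 0 3, D 1 2, D 1 3, D 2 3], Fintype.mem_piFinset.2 fun i => ?_, ?_⟩
  · fin_cases i <;> exact hD.off_diag _ _ (by decide)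
  · ext i j
    fin_cases i <;> fin_cases j <;> first | exact hD.diag _ | rfl | exact hD.apply_comm _ _

theorem toBlocks₂₁_eq_transpose {G : Matrix (m ⊕ n) (m ⊕ n) ℤ} (hG : IsReducedGram G) :
    G.toBlocks₂₁ = G.toBlocks₁₂ᵀ := by
  ext i j
  exact hG.apply_comm _ _

variable [Fintype m] [DecidableEq m] {G : Matrix (m ⊕ n) (m ⊕ n) ℤ}

theorem intSchurComplement_eq_of_forall_eq_neg_one (hG : IsReducedGram G)
    (hB : ∀ l, G.toBlocks₁₂.col l = -1) :
    intSchurComplement G = G.toBlocks₁₁.det • G.toBlocks₂₂ -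
      (1 ⬝ᵥ G.toBlocks₁₁.adjugate *ᵥ 1) • Matrix.of fun _ _ => 1 := by
  have hB' : G.toBlocks₁₂ = Matrix.of fun _ _ => -1 := by
    ext i l
    exact congrFun (hB l) i
  rw [intSchurComplement, hG.toBlocks₂₁_eq_transpose, Matrix.mul_assoc, hB']
  congr 1
  ext i j
  simp [Matrix.mul_apply, Matrix.mulVec, dotProduct]

theorem posSemidef_intSchurComplement [Finite n] (hG : IsReducedGram G)
    (hP : 0 < G.toBlocks₁₁.det) :
    ((intSchurComplement G).map (Int.cast : ℤ → ℝ)).PosSemidef := by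
  set φ := Int.castRingHom ℝ
  have hdet : (G.toBlocks₁₁.map φ).det = G.toBlocks₁₁.det := (φ.map_det _).symm
  have hmap : (intSchurComplement G).map φ = (G.toBlocks₁₁.map φ).det • G.toBlocks₂₂.map φ -
      (G.toBlocks₁₂.map φ)ᵀ * (G.toBlocks₁₁.map φ).adjugate * G.toBlocks₁₂.map φ := by
    have hadj : (G.toBlocks₁₁.map φ).adjugate = G.toBlocks₁₁.adjugate.map φ :=
      (φ.map_adjugate _).symm
    rw [hdet, hadj, ← Matrix.transpose_map, ← Matrix.map_mul, ← Matrix.map_mul,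
      intSchurComplement, hG.toBlocks₂₁_eq_transpose]
    ext i j
    simp [φ, -zsmul_eq_mul]
  refine hmap ▸ posSemidef_schurComplement (hdet ▸ Int.cast_pos.2 hP) ?_
  convert hG.posSemidef
  rw [← Matrix.transpose_map, ← hG.toBlocks₂₁_eq_transpose, ← Matrix.fromBlocks_map,
    Matrix.fromBlocks_toBlocks]
  rfl

variable [Fintype n]

theorem trace_intSchurComplement (hG : IsReducedGram G) :
    (intSchurComplement G).trace = ∑ l, (7 * G.toBlocks₁₁.det -
      G.toBlocks₁₂.col l ⬝ᵥ G.toBlocks₁₁.adjugate *ᵥ G.toBlocks₁₂.col l) := by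
  refine Finset.sum_congr rfl fun l _ => ?_
  rw [intSchurComplement, hG.toBlocks₂₁_eq_transpose, Matrix.mul_assoc]
  have : G.toBlocks₂₂ l l = 7 := hG.diag _
  rw [Matrix.diag_apply, Matrix.sub_apply, Matrix.smul_apply, this, smul_eq_mul, mul_comm]
  rfl

theorem det_pow_mul_det_le [DecidableEq n] (hG : IsReducedGram G) {k : ℕ}
    (hk : Fintype.card n = k + 1) {P : Matrix m m ℤ} (hP : G.toBlocks₁₁ = P) (hdet : 0 < P.det)
    {q₀ q₁ : ℤ} (hq₀ : ∀ v ∈ Fintype.piFinset fun _ : m => ({-1, 3} : Finset ℤ),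
      q₀ ≤ v ⬝ᵥ P.adjugate *ᵥ v)
    (hq₁ : ∀ v ∈ Fintype.piFinset fun _ : m => ({-1, 3} : Finset ℤ), v ≠ -1 →
      q₁ ≤ v ⬝ᵥ P.adjugate *ᵥ v)
    {l : n} (hl : G.toBlocks₁₂.col l ≠ -1) :
    (k + 1) ^ (k + 1) * (P.det ^ k * G.det) ≤ (7 * (k + 1) * P.det - (k * q₀ + q₁)) ^ (k + 1) := by
  subst hP
  have : Nonempty n := ⟨l⟩
  have hpsd := hG.posSemidef_intSchurComplement hdet
  have hmem (l) : G.toBlocks₁₂.col l ∈ Fintype.piFinset fun _ : m => ({-1, 3} : Finset ℤ) :=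
    Fintype.mem_piFinset.2 fun _ => hG.off_diag _ _ Sum.inl_ne_inr
  have htrace : (intSchurComplement G).trace ≤
      7 * (k + 1) * G.toBlocks₁₁.det - (k * q₀ + q₁) := by
    have hrest : k * q₀ ≤ ∑ j ∈ Finset.univ.erase l,
        G.toBlocks₁₂.col j ⬝ᵥ G.toBlocks₁₁.adjugate *ᵥ G.toBlocks₁₂.col j := by
      have hcard : (Finset.univ.erase l).card = k := by simp [hk]
      simpa [hcard] using Finset.card_nsmul_le_sum (Finset.univ.erase l) _ q₀
        fun j _ => hq₀ _ (hmem j)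
    rw [hG.trace_intSchurComplement, Finset.sum_sub_distrib, Finset.sum_const, Finset.card_univ,
      hk, nsmul_eq_mul, ← Finset.sum_erase_add _ _ (Finset.mem_univ l)]
    push_cast
    linarith [hq₁ _ (hmem l) hl]
  have htrace_nonneg : 0 ≤ (intSchurComplement G).trace := by
    have := hpsd.trace_nonneg
    rw [trace_map_intCast] at this
    exact_mod_cast this
  have h := card_pow_mul_det_le_trace_pow hpsd
  rw [← det_pow_mul_det_eq_det_intSchurComplement hk hdet.ne', hk] at h
  push_cast at h
  exact h.trans (pow_le_pow_left₀ htrace_nonneg htrace _)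

end IsReducedGram

end ReducedGram

section LargeDeterminant

open scoped Matrix

namespace IsReducedGram

variable {G : Matrix (Fin 3 ⊕ Fin 4) (Fin 3 ⊕ Fin 4) ℤ} {P : Matrix (Fin 3) (Fin 3) ℤ}

theorem exists_det_eq_det_reducedGramFour (hG : IsReducedGram G) (hP : G.toBlocks₁₁ = P)
    (hdet : P.det ≠ 0) (hB : ∀ l, G.toBlocks₁₂.col l = -1) :
    ∃ x ∈ Fintype.piFinset fun _ : Fin 6 => ({-1, 3} : Finset ℤ), P.det ^ 3 * G.det =
      (P.det • reducedGramFour x - (1 ⬝ᵥ P.adjugate *ᵥ 1) • Matrix.of fun _ _ => 1).det := by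
  obtain ⟨x, hx, hD⟩ := (hG.submatrix Sum.inr_injective).exists_eq_reducedGramFour
  refine ⟨x, hx, ?_⟩
  subst hP
  rw [det_pow_mul_det_eq_det_intSchurComplement (by simp) hdet,
    hG.intSchurComplement_eq_of_forall_eq_neg_one hB, ← hD]
  rfl

theorem det_lt_of_toBlocks₁₁_eq (hG : IsReducedGram G) (hP : G.toBlocks₁₁ = P)
    (hdet : 0 < P.det) {q₀ q₁ d : ℤ}
    (hq₀ : ∀ v ∈ Fintype.piFinset fun _ : Fin 3 => ({-1, 3} : Finset ℤ),
      q₀ ≤ v ⬝ᵥ P.adjugate *ᵥ v)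
    (hq₁ : ∀ v ∈ Fintype.piFinset fun _ : Fin 3 => ({-1, 3} : Finset ℤ), v ≠ -1 →
      q₁ ≤ v ⬝ᵥ P.adjugate *ᵥ v)
    (hd : (28 * P.det - (3 * q₀ + q₁)) ^ 4 < 4 ^ 4 * (P.det ^ 3 * d))
    (hd' : ∀ x ∈ Fintype.piFinset fun _ : Fin 6 => ({-1, 3} : Finset ℤ),
      (P.det • reducedGramFour x - (1 ⬝ᵥ P.adjugate *ᵥ 1) • Matrix.of fun _ _ => 1).det <
        P.det ^ 3 * d) : G.det < d := by
  refine lt_of_mul_lt_mul_left (a := P.det ^ 3) ?_ (by positivity)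
  by_cases hB : ∀ l, G.toBlocks₁₂.col l = -1
  · obtain ⟨x, hx, h⟩ := hG.exists_det_eq_det_reducedGramFour hP hdet.ne' hB
    exact h ▸ hd' x hx
  · obtain ⟨l, hl⟩ := not_forall.1 hB
    have h := hG.det_pow_mul_det_le (k := 3) (by simp) hP hdet hq₀ hq₁ hl
    norm_num at h
    linarith

-- Here `331776 = (9 * 2 ^ 6) ^ 2` and `409600 = (10 * 2 ^ 6) ^ 2` are the least possible squares of
-- determinants beyond `(8 * 2 ^ 6) ^ 2`; `q₀` and `q₁` are the minimal values of the quadratic form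
-- of the adjugate, over all admissible columns and over those different from `-1`.
theorem det_lt_of_path (hG : IsReducedGram G)
    (hP : G.toBlocks₁₁ = !![7, 3, 3; 3, 7, -1; 3, -1, 7]) : G.det < 331776 :=
  hG.det_lt_of_toBlocks₁₁_eq hP (q₀ := 64) (q₁ := 448) (by decide +kernel) (by decide +kernel)
    (by decide +kernel) (by decide +kernel) (by decide +kernel)

theorem det_lt_of_triangle (hG : IsReducedGram G)
    (hP : G.toBlocks₁₁ = !![7, 3, 3; 3, 7, 3; 3, 3, 7]) : G.det < 331776 :=
  hG.det_lt_of_toBlocks₁₁_eq hP (q₀ := 48) (q₁ := 432) (by decide +kernel) (by decide +kernel)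
    (by decide +kernel) (by decide +kernel) (by decide +kernel)

theorem det_lt_and_ne_of_isolated (hG : IsReducedGram G)
    (hP : G.toBlocks₁₁ = !![7, -1, -1; -1, 7, -1; -1, -1, 7])
    (hB : ∀ l, G.toBlocks₁₂.col l = -1) : G.det < 409600 ∧ G.det ≠ 331776 := by
  set P : Matrix (Fin 3) (Fin 3) ℤ := !![7, -1, -1; -1, 7, -1; -1, -1, 7]
  have hdet : P.det = 320 := by decide +kernel
  have hcheck : ∀ x ∈ Fintype.piFinset fun _ : Fin 6 => ({-1, 3} : Finset ℤ),
      (P.det • reducedGramFour x - (1 ⬝ᵥ P.adjugate *ᵥ 1) • Matrix.of fun _ _ => 1).det <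
        320 ^ 3 * 409600 ∧
      (P.det • reducedGramFour x - (1 ⬝ᵥ P.adjugate *ᵥ 1) • Matrix.of fun _ _ => 1).det ≠
        320 ^ 3 * 331776 := by
    decide +kernel
  obtain ⟨x, hx, h⟩ := hG.exists_det_eq_det_reducedGramFour hP (by simp [hdet]) hB
  have := hcheck x hx
  rw [← h, hdet] at this
  omega

end IsReducedGram

end LargeDeterminant

section Pairing

open scoped Matrix

theorem isConj_of_sq_eq_one {α : Type*} [Fintype α] [DecidableEq α] {σ τ : Equiv.Perm α}
    (hσ : σ ^ 2 = 1) (hτ : τ ^ 2 = 1) (h : σ.support.card = τ.support.card) : IsConj σ τ := by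
  rw [Equiv.Perm.isConj_iff_cycleType_eq]
  rw [← Equiv.Perm.sum_cycleType, ← Equiv.Perm.sum_cycleType,
    Equiv.Perm.cycleType_of_pow_prime_eq_one hσ, Equiv.Perm.cycleType_of_pow_prime_eq_one hτ,
    Multiset.sum_replicate, Multiset.sum_replicate] at h
  rw [Equiv.Perm.cycleType_of_pow_prime_eq_one hσ, Equiv.Perm.cycleType_of_pow_prime_eq_one hτ,
    Nat.eq_of_mul_eq_mul_right two_pos h]

theorem exists_sum_equiv_extending {m n k : Type*} [Fintype m] [Fintype n] [Fintype k]
    {f : m → k} (hf : f.Injective)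
    (hcard : Fintype.card m + Fintype.card n = Fintype.card k) :
    ∃ e : m ⊕ n ≃ k, ∀ a, e (.inl a) = f a := by
  classical
  have hcompl : Fintype.card n = Fintype.card ↥(Set.range f)ᶜ := by
    rw [Fintype.card_compl_set, Set.card_range_of_injective hf]
    omega
  exact ⟨((Equiv.ofInjective f hf).sumCongr (Fintype.equivOfCardEq hcompl)).trans
    (Equiv.Set.sumCompl _), fun a => by simp⟩

/-- The matrix with diagonal `7` whose entries `3` mark the pairs exchanged by the involution `τ`
and whose other entries are `-1`. Large determinants force a reduced Gram matrix into this form. -/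
def pairingGram {n : Type*} [DecidableEq n] (τ : Equiv.Perm n) : Matrix n n ℤ :=
  Matrix.of fun i j => if i = j then 7 else if τ i = j then 3 else -1

theorem pairingGram_conj {n : Type*} [DecidableEq n] (e τ : Equiv.Perm n) :
    (pairingGram (e * τ * e⁻¹)).submatrix e e = pairingGram τ := by
  ext i j
  simp [pairingGram]

namespace IsReducedGram

theorem exists_eq_pairingGram {n : Type*} [DecidableEq n] {G : Matrix n n ℤ}
    (hG : IsReducedGram G) (h : ∀ i j k, i ≠ j → i ≠ k → G i j = 3 → G i k = 3 → j = k) :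
    ∃ τ : Equiv.Perm n, τ ^ 2 = 1 ∧ G = pairingGram τ := by
  classical
  set f : n → n := fun i => if hi : ∃ j, i ≠ j ∧ G i j = 3 then hi.choose else i
  have hf : ∀ i j, i ≠ j → (f i = j ↔ G i j = 3) := fun i j hij => by
    by_cases hi : ∃ j, i ≠ j ∧ G i j = 3
    · simp only [f, dif_pos hi]
      exact ⟨fun h => h ▸ hi.choose_spec.2,
        fun hj => h i _ _ hi.choose_spec.1 hij hi.choose_spec.2 hj⟩
    · simp only [f, dif_neg hi]
      exact ⟨fun h => (hij h).elim, fun hj => (hi ⟨j, hij, hj⟩).elim⟩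
  have hinv : f.Involutive := fun i => by
    by_cases hi : f i = i
    · rw [hi, hi]
    · rw [hf _ _ hi, hG.apply_comm, ← hf _ _ (Ne.symm hi)]
  refine ⟨hinv.toPerm, Equiv.ext fun i => hinv i, ?_⟩
  ext i j
  rcases eq_or_ne i j with rfl | hij
  · simpa [pairingGram] using hG.diag i
  · have hmem : G i j = -1 ∨ G i j = 3 := by simpa using hG.off_diag i j hij
    by_cases hfi : f i = j
    · simp [pairingGram, hij, hfi, (hf i j hij).1 hfi]
    · simp [pairingGram, hij, hfi, hmem.resolve_right (mt (hf i j hij).2 hfi)]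

variable {G : Matrix (Fin 7) (Fin 7) ℤ}

theorem exists_equiv_toBlocks₁₁_eq (hG : IsReducedGram G) {i j k : Fin 7} (hij : i ≠ j)
    (hik : i ≠ k) (hjk : j ≠ k) : ∃ e : Fin 3 ⊕ Fin 4 ≃ Fin 7, (∀ a, e (.inl a) = ![i, j, k] a) ∧
      (G.submatrix e e).toBlocks₁₁ =
        !![7, G i j, G i k; G i j, 7, G j k; G i k, G j k, 7] := by
  have hinj : Function.Injective ![i, j, k] := by
    intro a b
    fin_cases a <;> fin_cases b <;> simp [hij, hik, hjk, hij.symm, hik.symm, hjk.symm]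
  obtain ⟨e, he⟩ := exists_sum_equiv_extending (n := Fin 4) hinj (by simp)
  refine ⟨e, he, ?_⟩
  ext a b
  simp only [Matrix.toBlocks₁₁, Matrix.of_apply, Matrix.submatrix_apply, he]
  fin_cases a <;> fin_cases b <;> first | exact hG.diag _ | rfl | exact hG.apply_comm _ _

theorem eq_of_apply_eq_three (hG : IsReducedGram G) (hdet : 331776 ≤ G.det) {i j k : Fin 7}
    (hij : i ≠ j) (hik : i ≠ k) (hj : G i j = 3) (hk : G i k = 3) : j = k := by
  by_contra hjk
  obtain ⟨e, -, he⟩ := hG.exists_equiv_toBlocks₁₁_eq hij hik hjk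
  rw [hj, hk] at he
  rw [← Matrix.det_submatrix_equiv_self e G] at hdet
  have hG' := hG.submatrix e.injective
  rcases Finset.mem_insert.1 (hG.off_diag j k hjk) with h | h
  · rw [h] at he
    exact hdet.not_gt (hG'.det_lt_of_path he)
  · rw [Finset.mem_singleton.1 h] at he
    exact hdet.not_gt (hG'.det_lt_of_triangle he)

theorem det_pairingGram_lt_and_ne {τ : Equiv.Perm (Fin 7)} (hG : IsReducedGram (pairingGram τ))
    (hτ : 2 < τ.supportᶜ.card) : (pairingGram τ).det < 409600 ∧ (pairingGram τ).det ≠ 331776 := by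
  obtain ⟨i, hi, j, hj, k, hk, hij, hik, hjk⟩ := Finset.two_lt_card.1 hτ
  simp only [Finset.mem_compl, Equiv.Perm.notMem_support] at hi hj hk
  have hiso : ∀ {i l}, τ i = i → i ≠ l → pairingGram τ i l = -1 := fun hi hl => by
    simp [pairingGram, hi, hl]
  obtain ⟨e, he, hP⟩ := hG.exists_equiv_toBlocks₁₁_eq hij hik hjk
  rw [hiso hi hij, hiso hi hik, hiso hj hjk] at hP
  rw [← Matrix.det_submatrix_equiv_self e]
  refine (hG.submatrix e.injective).det_lt_and_ne_of_isolated hP fun l => funext fun a => ?_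
  refine hiso ?_ (e.injective.ne Sum.inl_ne_inr)
  rw [he]
  fin_cases a <;> assumption

theorem exists_submatrix_eq_pairingGram (hG : IsReducedGram G)
    (hdet : G.det = 331776 ∨ 409600 ≤ G.det) : ∃ e : Equiv.Perm (Fin 7),
      G.submatrix e e = pairingGram (Equiv.swap 0 1 * Equiv.swap 2 3 * Equiv.swap 4 5) := by
  set τ₀ : Equiv.Perm (Fin 7) := Equiv.swap 0 1 * Equiv.swap 2 3 * Equiv.swap 4 5
  obtain ⟨τ, hτ, rfl⟩ := hG.exists_eq_pairingGram fun i j k =>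
    hG.eq_of_apply_eq_three (by rcases hdet with h | h <;> linarith)
  have hcompl : τ.supportᶜ.card ≤ 2 := by
    by_contra! h
    obtain ⟨hlt, hne⟩ := hG.det_pairingGram_lt_and_ne h
    exact hdet.elim hne hlt.not_ge
  have hmod : τ.supportᶜ.card ≡ 7 [MOD 2] :=
    Equiv.Perm.card_compl_support_modEq (p := 2) (n := 1) hτ
  have hcard : τ.support.card = 6 := by
    rw [Finset.card_compl, Fintype.card_fin] at hcompl hmod
    have := τ.support.card_le_univ
    rw [Fintype.card_fin] at this
    unfold Nat.ModEq at hmod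
    omega
  obtain ⟨e, he⟩ := isConj_iff.1
    (isConj_of_sq_eq_one (σ := τ₀) (τ := τ) (by decide) hτ (hcard ▸ by decide))
  exact ⟨e, he ▸ pairingGram_conj e τ₀⟩

end IsReducedGram

end Pairing

section SignMatrixBound

open scoped Matrix

namespace IsSignMatrix

theorem exists_diagonal_mul_prod_eq_one {m n : Type*} [Fintype m] [DecidableEq m] [Fintype n]
    (hn : Odd (Fintype.card n)) {M : Matrix m n ℤ} (hM : IsSignMatrix M) :
    ∃ (s : m → ℤ) (N : Matrix m n ℤ), (∀ i, s i = 1 ∨ s i = -1) ∧ IsSignMatrix N ∧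
      (∀ i, ∏ j, N i j = 1) ∧ M = Matrix.diagonal s * N := by
  set s : m → ℤ := fun i => ∏ j, M i j
  have hs : ∀ i, s i = 1 ∨ s i = -1 := fun i =>
    Finset.prod_induction _ (fun x : ℤ => x = 1 ∨ x = -1)
      (by rintro _ _ (rfl | rfl) (rfl | rfl) <;> norm_num) (.inl rfl) fun j _ => hM i j
  have hss : ∀ i, s i * s i = 1 := fun i => by rcases hs i with h | h <;> simp [h]
  refine ⟨s, Matrix.diagonal s * M, hs, fun i j => ?_, fun i => ?_, ?_⟩
  · rw [Matrix.diagonal_mul]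
    rcases hs i with h | h <;> rcases hM i j with h' | h' <;> simp [h, h']
  · simp only [Matrix.diagonal_mul, Finset.prod_mul_distrib, Finset.prod_const, Finset.card_univ]
    change s i ^ Fintype.card n * s i = 1
    rcases hs i with h | h <;> simp [h, hn.neg_one_pow]
  · rw [← Matrix.mul_assoc, Matrix.diagonal_mul_diagonal]
    simp [hss]

theorem isReducedGram_mul_transpose {M : Matrix (Fin 7) (Fin 7) ℤ} (hM : IsSignMatrix M)
    (hprod : ∀ i, ∏ j, M i j = 1) (hdet : 4 * 6 ^ 6 < M.det ^ 2) : IsReducedGram (M * Mᵀ) where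
  posSemidef := posSemidef_map_mul_transpose M
  diag := hM.mul_transpose_diag
  off_diag i j hij := by
    have habs : |(M * Mᵀ) i j| ≤ 3 := by
      by_contra! h
      exact hdet.not_ge (by exact_mod_cast hM.det_sq_le_of_lt_abs_mul_transpose hij (by simpa))
    have hmod := hM.mul_transpose_modEq_card hprod i j
    rw [Fintype.card_fin, Int.ModEq] at hmod
    rw [abs_le] at habs
    rw [Finset.mem_insert, Finset.mem_singleton]
    omega

theorem det_sq_eq_or_le {M : Matrix (Fin 7) (Fin 7) ℤ} (hM : IsSignMatrix M)
    (hdet : 512 < |M.det|) : M.det ^ 2 = 331776 ∨ 409600 ≤ M.det ^ 2 := by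
  obtain ⟨q, hq⟩ := two_pow_dvd_det hM.odd
  rw [hq, abs_mul] at hdet
  have hq9 : 9 ≤ |q| := by norm_num at hdet; omega
  rw [hq, mul_pow, ← sq_abs q]
  rcases hq9.eq_or_lt with h | h
  · left; norm_num [← h]
  · right; nlinarith

theorem exists_mul_transpose_eq_pairingGram {M : Matrix (Fin 7) (Fin 7) ℤ} (hM : IsSignMatrix M)
    (hdet : 512 < |M.det|) : ∃ (s : Fin 7 → ℤ) (e : Equiv.Perm (Fin 7))
      (N : Matrix (Fin 7) (Fin 7) ℤ), (∀ i, s i = 1 ∨ s i = -1) ∧ IsSignMatrix N ∧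
        N * Nᵀ = pairingGram (Equiv.swap 0 1 * Equiv.swap 2 3 * Equiv.swap 4 5) ∧
        M = Matrix.diagonal s * N.submatrix e id := by
  obtain ⟨s, N, hs, hN, hprod, rfl⟩ := hM.exists_diagonal_mul_prod_eq_one (by decide)
  have habs : |(Matrix.diagonal s * N).det| = |N.det| := by
    have : ∀ i, |s i| = 1 := fun i => by rcases hs i with h | h <;> simp [h]
    simp [Matrix.det_mul, Matrix.det_diagonal, abs_mul, Finset.abs_prod, this]
  rw [habs] at hdet
  have hsq := hN.det_sq_eq_or_le hdet
  have hG : IsReducedGram (N * Nᵀ) := hN.isReducedGram_mul_transpose hprod (by omega)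
  rw [sq, ← congrArg (N.det * ·) N.det_transpose, ← Matrix.det_mul] at hsq
  obtain ⟨e, he⟩ := hG.exists_submatrix_eq_pairingGram hsq
  refine ⟨s, e⁻¹, N.submatrix e id, hs, fun _ _ => hN _ _, ?_, by simp⟩
  rw [← he, Matrix.transpose_submatrix, Matrix.submatrix_mul _ _ e id e Function.bijective_id]

theorem schurNorm_le_of_interpolation {n : Type*} [Fintype n] [DecidableEq n] {M : Matrix n n ℤ}
    (hM : IsSignMatrix M) {c p : ℤ} (hc : c ≠ 0) (hp : 0 < p) (W : Matrix n n ℤ) {w : n → ℤ}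
    (hw : ∀ k, 0 < w k) {α : ℤ}
    (hα : ∀ i, p * ((c • 1 - W) * (M * Mᵀ) * (c • 1 - W)ᵀ : Matrix n n ℤ) i i +
      ∑ k, w k * W i k ^ 2 ≤ α) :
    (M.map (Int.cast : ℤ → ℂ)).schurNorm ≤ √(α / (p * c ^ 2)) * √(1 + ∑ k, (p / w k : ℝ)) := by
  have habs : ∀ i j, |M.map (Int.cast : ℤ → ℝ) i j| ≤ 1 := fun i j => by
    rcases hM i j with h | h <;> simp [h]
  have hc' : (c : ℝ) ≠ 0 := Int.cast_ne_zero.2 hc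
  have hp' : (0 : ℝ) < p := Int.cast_pos.2 hp
  have hcompl : (1 : Matrix n n ℝ) - (c : ℝ)⁻¹ • W.map Int.cast =
      (c : ℝ)⁻¹ • (c • 1 - W).map Int.cast := by
    ext i j
    by_cases hij : i = j <;> simp [hij, mul_sub, hc', -zsmul_eq_mul, -zsmul_one]
  have hgram : ∀ X : Matrix n n ℤ, X.map (Int.cast : ℤ → ℝ) *
      (M.map Int.cast * (M.map Int.cast)ᵀ) * (X.map Int.cast)ᵀ =
        (X * (M * Mᵀ) * Xᵀ).map Int.cast := fun X => by
    simp only [Matrix.map_mul_intCast, Matrix.transpose_map]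
  have hmap : M.map (Int.cast : ℤ → ℂ) = (M.map (Int.cast : ℤ → ℝ)).map Complex.ofReal := by
    ext; simp
  rw [hmap]
  refine _root_.schurNorm_le_of_interpolation habs ((c : ℝ)⁻¹ • W.map Int.cast)
    (fun k => div_pos hp' (Int.cast_pos.2 (hw k))) fun i => ?_
  have hα' : (p : ℝ) * ((c • 1 - W) * (M * Mᵀ) * (c • 1 - W)ᵀ : Matrix n n ℤ) i i +
      ∑ k, (w k : ℝ) * W i k ^ 2 ≤ α := by exact_mod_cast hα i
  rw [hcompl, Matrix.transpose_smul, Matrix.smul_mul, Matrix.smul_mul, Matrix.mul_smul, hgram,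
    le_div_iff₀ (by positivity)]
  refine le_of_eq_of_le ?_ hα'
  rw [add_mul, Finset.sum_mul]
  simp only [Matrix.smul_apply, Matrix.map_apply, smul_eq_mul]
  congr 1
  · field_simp
  · refine Finset.sum_congr rfl fun k _ => ?_
    have : (w k : ℝ) ≠ 0 := Int.cast_ne_zero.2 (hw k).ne'
    field_simp

theorem schurNorm_le_of_mul_transpose_eq_pairingGram {M : Matrix (Fin 7) (Fin 7) ℤ}
    (hM : IsSignMatrix M)
    (hG : M * Mᵀ = pairingGram (Equiv.swap 0 1 * Equiv.swap 2 3 * Equiv.swap 4 5)) :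
    (M.map (Int.cast : ℤ → ℂ)).schurNorm ≤ (1 + 12 * √2) / 7 := by
  -- The bound obtained, `2.5643…`, is less than `(1 + 12 * √2) / 7 = 2.5672…`: this margin allows
  -- replacing the optimal interpolation matrix and weights by simple rational ones.
  set w : Fin 7 → ℤ := ![13, 13, 13, 13, 13, 13, 12]
  have h := hM.schurNorm_le_of_interpolation (c := 30) (p := 2) (α := 5664) (by decide) (by decide)
    (M * Mᵀ + Matrix.diagonal ![8, 8, 8, 8, 8, 8, 9]) (w := w) (by decide)
    (by rw [hG]; decide +kernel)
  have hsum : 1 + ∑ k, (((2 : ℤ) : ℝ) / (w k : ℝ)) = 163 / 78 := by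
    norm_num [w, Fin.sum_univ_succ]
  rw [hsum, ← Real.sqrt_mul (by norm_num)] at h
  refine h.trans (Real.sqrt_le_iff.2 ⟨by positivity, ?_⟩)
  norm_num
  nlinarith [Real.sq_sqrt zero_le_two, Real.sqrt_nonneg 2]

theorem schurNorm_fin_seven_le {M : Matrix (Fin 7) (Fin 7) ℤ} (hM : IsSignMatrix M) :
    (M.map (Int.cast : ℤ → ℂ)).schurNorm ≤ (1 + 12 * √2) / 7 := by
  by_cases hdet : |M.det| ≤ 512
  · have hnorm : ∀ i j, ‖M.map (Int.cast : ℤ → ℂ) i j‖ ≤ 1 := fun i j => by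
      rcases hM i j with h | h <;> simp [h]
    have hsqrt : √((6 : ℕ) + 2) = 2 * √2 := by
      rw [show ((6 : ℕ) + 2 : ℝ) = 2 ^ 2 * 2 by norm_num, Real.sqrt_mul (by norm_num),
        Real.sqrt_sq zero_le_two]
    have hnormdet : ‖(M.map (Int.cast : ℤ → ℂ)).det‖ ≤ √((6 : ℕ) + 2) ^ 6 := by
      rw [← Int.cast_det, Complex.norm_intCast, hsqrt, mul_pow, pow_mul √2 2 3,
        Real.sq_sqrt zero_le_two]
      norm_num
      exact_mod_cast hdet
    have h := schurNorm_le_of_norm_det_le (by simp) hnorm hnormdet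
    rw [hsqrt] at h
    convert h using 1
    push_cast
    ring
  · obtain ⟨s, e, N, hs, hN, hG, rfl⟩ :=
      hM.exists_mul_transpose_eq_pairingGram (not_le.1 hdet)
    have hmap : (Matrix.diagonal s * N.submatrix e id).map (Int.cast : ℤ → ℂ) =
        Matrix.diagonal (fun i => (s i : ℂ)) * (N.map Int.cast).submatrix e id := by
      ext; simp
    rw [hmap]
    exact (schurNorm_diagonal_mul_le (fun i => by rcases hs i with h | h <;> simp [h]) _).trans
      ((schurNorm_submatrix_perm_le e _).trans
        (hN.schurNorm_le_of_mul_transpose_eq_pairingGram hG))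

end IsSignMatrix

theorem schurNorm_le_of_forall_isSignMatrix {n : Type*} [Fintype n] [DecidableEq n] {K : ℝ}
    (hK : ∀ M : Matrix n n ℤ, IsSignMatrix M → (M.map (Int.cast : ℤ → ℂ)).schurNorm ≤ K)
    {M : Matrix n n ℝ} (hM : ∀ i j, |M i j| ≤ 1) : (M.map Complex.ofReal).schurNorm ≤ K := by
  set S : Set (Matrix n n ℝ) := {M | (M.map Complex.ofReal).schurNorm ≤ K}
  have hconvex : Convex ℝ S := (convex_setOf_schurNorm_le K).is_linear_preimage
    (f := fun M : Matrix n n ℝ => M.map Complex.ofReal)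
    ⟨fun A B => by ext; simp, fun c A => by ext; simp⟩
  have hsigns : ∀ N : Matrix n n ℝ, (∀ i j, N i j = -1 ∨ N i j = 1) → N ∈ S := fun N hN => by
    choose A hA using fun i j => show ∃ a : ℤ, (a = 1 ∨ a = -1) ∧ N i j = a by
      rcases hN i j with h | h
      exacts [⟨-1, .inr rfl, by simp [h]⟩, ⟨1, .inl rfl, by simp [h]⟩]
    have hmap : N.map Complex.ofReal = (Matrix.of A).map Int.cast := by
      ext i j
      simp [(hA i j).2]
    change (N.map Complex.ofReal).schurNorm ≤ K
    exact hmap ▸ hK (Matrix.of A) fun i j => (hA i j).1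
  have hhull := convexHull_min (s := Set.univ.pi fun _ => Set.univ.pi fun _ => {-1, 1})
    (fun N hN => hsigns N fun i j => hN i trivial j trivial) hconvex
  simp only [convexHull_pi, convexHull_pair, segment_eq_Icc (by norm_num : (-1 : ℝ) ≤ 1)] at hhull
  exact hhull fun i _ j _ => abs_le.1 (hM i j)

end SignMatrixBound

section LowerBound

open scoped Matrix.Norms.L2Operator Matrix

variable {n : Type*} [Fintype n] [DecidableEq n] [Nonempty n]

theorem norm_map_ofReal_le_one {C : Matrix n n ℝ} (hC : C * Cᵀ = 1) :
    ‖C.map Complex.ofReal‖ ≤ 1 := by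
  have hmem : C.map Complex.ofReal ∈ unitary (Matrix n n ℂ) := by
    refine Matrix.mem_unitaryGroup_iff.2 ?_
    have hstar : star (C.map Complex.ofReal) = Cᵀ.map Complex.ofReal := by
      ext; simp
    rw [hstar, ← Matrix.map_one Complex.ofReal Complex.ofReal_zero Complex.ofReal_one, ← hC]
    exact (Matrix.map_mul (f := Complex.ofRealHom)).symm
  exact CStarRing.norm_of_mem_unitary hmem |>.le

theorem trace_mul_transpose_le_card_mul_schurNorm (M : Matrix n n ℝ) {C : Matrix n n ℝ}
    (hC : C * Cᵀ = 1) :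
    (M * Cᵀ).trace ≤ Fintype.card n * (M.map Complex.ofReal).schurNorm := by
  have hsum : ∑ i, ∑ j, (M.map Complex.ofReal ⊙ C.map Complex.ofReal) i j =
      ((M * Cᵀ).trace : ℂ) := by
    rw [← Matrix.sum_hadamard_eq]
    simp
  calc (M * Cᵀ).trace ≤ ‖∑ i, ∑ j, (M.map Complex.ofReal ⊙ C.map Complex.ofReal) i j‖ := by
        rw [hsum, Complex.norm_real]
        exact Real.le_norm_self _
    _ ≤ Fintype.card n * ‖M.map Complex.ofReal ⊙ C.map Complex.ofReal‖ := norm_sum_entries_le _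
    _ ≤ Fintype.card n * (M.map Complex.ofReal).schurNorm := by
        gcongr
        exact norm_hadamard_le_schurNorm _ (norm_map_ofReal_le_one hC)

theorem exists_orthogonal_trace_eq {M : Matrix n n ℝ}
    (hM : M * Mᵀ = (Fintype.card n + 1 : ℝ) • 1 - Matrix.of fun _ _ => 1) :
    ∃ C : Matrix n n ℝ, C * Cᵀ = 1 ∧
      (M * Cᵀ).trace = 1 + (Fintype.card n - 1) * √(Fintype.card n + 1) := by
  set N : ℝ := (Fintype.card n : ℝ)
  have hN : 0 < N := Nat.cast_pos.2 Fintype.card_pos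
  set J : Matrix n n ℝ := Matrix.of fun _ _ => 1
  set a : ℝ := (√(N + 1))⁻¹
  set b : ℝ := (1 - a) / N
  set A : Matrix n n ℝ := a • 1 + b • J
  have hJJ : J * J = N • J := by
    ext; simp [J, N, Matrix.mul_apply]
  have hbN : b * N = 1 - a := div_mul_cancel₀ _ hN.ne'
  have haN : a ^ 2 * (N + 1) = 1 := by
    rw [inv_pow, Real.sq_sqrt (by positivity), inv_mul_cancel₀ (by positivity)]
  have haN' : a * (N + 1) = √(N + 1) := by
    rw [← div_eq_inv_mul, Real.div_sqrt]
  have hab : a * b + b = a ^ 2 := by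
    refine mul_right_cancel₀ hN.ne' ?_
    linear_combination (a + 1) * hbN - haN
  have hAM : A * (M * Mᵀ) = (a * (N + 1)) • 1 + (b - a) • J := by
    rw [hM]
    simp only [A, add_mul, mul_sub, smul_mul_assoc, mul_smul_comm, one_mul, mul_one, hJJ]
    module
  have hAT : Aᵀ = A := by
    simp only [A, Matrix.transpose_add, Matrix.transpose_smul, Matrix.transpose_one]
    rfl
  -- `A` is the inverse positive square root of `M * Mᵀ`, so `A * M` is the polar factor of `M`
  refine ⟨A * M, ?_, ?_⟩
  · rw [Matrix.transpose_mul, hAT, ← Matrix.mul_assoc, Matrix.mul_assoc A, hAM]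
    simp only [A, add_mul, mul_add, smul_mul_assoc, mul_smul_comm, one_mul, mul_one, hJJ]
    match_scalars
    · linear_combination haN
    · linear_combination hab + b * hbN
  · have htraceJ : J.trace = N := by simp [J, N, Matrix.trace]
    rw [Matrix.transpose_mul, hAT, ← Matrix.mul_assoc, Matrix.trace_mul_comm, hAM,
      Matrix.trace_add, Matrix.trace_smul, Matrix.trace_smul, Matrix.trace_one, htraceJ, ← haN']
    simp only [smul_eq_mul]
    linear_combination hbN

theorem le_schurNorm_of_mul_transpose_eq {M : Matrix n n ℝ}
    (hM : M * Mᵀ = (Fintype.card n + 1 : ℝ) • 1 - Matrix.of fun _ _ => 1) :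
    (1 + (Fintype.card n - 1) * √(Fintype.card n + 1)) / Fintype.card n ≤
      (M.map Complex.ofReal).schurNorm := by
  obtain ⟨C, hC, htrace⟩ := exists_orthogonal_trace_eq hM
  rw [div_le_iff₀' (Nat.cast_pos.2 Fintype.card_pos), ← htrace]
  exact trace_mul_transpose_le_card_mul_schurNorm M hC

end LowerBound

section Paley

open scoped Matrix

/-- The first column of the circulant Paley matrix of order `7`: `-1` at the nonzero squares modulo
`7` and `1` elsewhere. -/
def paleySeven : Fin 7 → ℤ := ![1, -1, -1, 1, -1, 1, 1]

theorem paleySeven_eq_one_or_neg_one : ∀ k, paleySeven k = 1 ∨ paleySeven k = -1 := by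
  decide

theorem circulant_paleySeven_mul_transpose :
    Matrix.circulant paleySeven * (Matrix.circulant paleySeven)ᵀ =
      (8 : ℤ) • 1 - Matrix.of fun _ _ => 1 := by
  decide +kernel

theorem le_schurNorm_circulant_paleySeven :
    (1 + 12 * √2) / 7 ≤ ((Matrix.circulant paleySeven).map (Int.cast : ℤ → ℂ)).schurNorm := by
  have hgram : (Matrix.circulant paleySeven).map (Int.cast : ℤ → ℝ) *
      ((Matrix.circulant paleySeven).map Int.cast)ᵀ =
        (Fintype.card (Fin 7) + 1 : ℝ) • 1 - Matrix.of fun _ _ => 1 := by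
    rw [← Matrix.transpose_map, ← Matrix.map_mul_intCast, circulant_paleySeven_mul_transpose]
    ext i j
    simp only [Matrix.map_apply, Matrix.sub_apply, Matrix.smul_apply, Matrix.one_apply,
      Matrix.of_apply, Fintype.card_fin, smul_eq_mul]
    split_ifs <;> norm_num
  have h := le_schurNorm_of_mul_transpose_eq hgram
  have hmap : ((Matrix.circulant paleySeven).map (Int.cast : ℤ → ℝ)).map Complex.ofReal =
      (Matrix.circulant paleySeven).map Int.cast := by
    ext; simp
  rw [hmap, Fintype.card_fin, Nat.cast_ofNat, show (7 + 1 : ℝ) = 2 ^ 2 * 2 by norm_num,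
    Real.sqrt_mul (by norm_num), Real.sqrt_sq zero_le_two] at h
  convert h using 2
  ring

end Paley

/-- `r 7 = (1 + 12√2) / 7`, attained by a circulant `±1` matrix. -/
theorem rSchur_seven :
    rSchur 7 = (1 + 12 * Real.sqrt 2) / 7 ∧
      ∃ v : Fin 7 → ℝ, (∀ k, v k = 1 ∨ v k = -1) ∧
        Matrix.schurNorm ((Matrix.circulant v).map Complex.ofReal) =
          (1 + 12 * Real.sqrt 2) / 7 := by
  have hupper : ∀ {M : Matrix (Fin 7) (Fin 7) ℝ}, (∀ i j, |M i j| ≤ 1) →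
      (M.map Complex.ofReal).schurNorm ≤ (1 + 12 * √2) / 7 :=
    schurNorm_le_of_forall_isSignMatrix fun _ => IsSignMatrix.schurNorm_fin_seven_le
  set v : Fin 7 → ℝ := fun k => paleySeven k
  have hv : ∀ k, v k = 1 ∨ v k = -1 := fun k =>
    (paleySeven_eq_one_or_neg_one k).imp (by simp [v, ·]) (by simp [v, ·])
  have hvabs : ∀ i j, |Matrix.circulant v i j| ≤ 1 := fun i j =>
    (abs_eq zero_le_one).2 (hv (i - j)) |>.le
  have hmax : ((Matrix.circulant v).map Complex.ofReal).schurNorm = (1 + 12 * √2) / 7 := by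
    refine le_antisymm (hupper hvabs) (le_schurNorm_circulant_paleySeven.trans_eq ?_)
    congr 1
  refine ⟨IsGreatest.csSup_eq ⟨⟨_, hvabs, hmax.symm⟩, ?_⟩, v, hv, hmax⟩
  rintro _ ⟨M, hM, rfl⟩
  exact hupper hM
end

section
/- Let A be an n×n complex matrix. Then ‖A‖_S equals the infimum of all real numbers c ≥ 0 such that there exist Hermitian n×n complex matrices Y and Z with y_{jj} = z_{jj} = c for all 1 ≤ j ≤ n and such that the 2n×2n block matrix [[Y, A], [A*, Z]] is positive semidefinite; moreover this infimum is attained. -/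
open scoped ComplexOrder

/-!
The operator norm of `M` is at most `c` exactly when `[[c, M], [Mᴴ, c]]` is positive semidefinite.

If `[[Y, A], [Aᴴ, Z]]` is feasible and `‖C‖ ≤ 1`, its entrywise product with `[[1, C], [Cᴴ, 1]]` is
`[[c, A ∘ C], [(A ∘ C)ᴴ, c]]`, which is positive semidefinite by the Schur product theorem; hence
`‖A ∘ C‖ ≤ c`.

Conversely, attaining `c = ‖A‖_S` means completing a partial matrix: the diagonal is `c`, the
off-diagonal blocks are `A` and `Aᴴ`, and the off-diagonal entries of `Y` and `Z` are free. By
Hahn–Banach, a positive semidefinite completion exists as soon as `T = [[c, A], [Aᴴ, c]]` satisfies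
`0 ≤ re tr (H T)` for each positive definite `H` vanishing at the free entries. Scaling the diagonal
of `Hᵀ` to `1` turns it into some `[[1, C], [Cᴴ, 1]]`, so that `‖C‖ ≤ 1`, and `tr (H T)` is then a
value of the quadratic form of `[[c, A ∘ C], [(A ∘ C)ᴴ, c]]`, which is positive semidefinite.
-/

section Completion

open Matrix RCLike
open scoped MatrixOrder

variable {𝕜 ι : Type*} [RCLike 𝕜]

/-- The set of completions of a partial matrix: the matrices that agree with `T` except possibly at
the free entries, which are the pairs adjacent in `F`. In particular diagonal entries are never
free. -/
def completions (F : SimpleGraph ι) (T : Matrix ι ι 𝕜) : Set (Matrix ι ι 𝕜) :=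
  {Q | ∀ i j, ¬ F.Adj i j → Q i j = T i j}

lemma convex_completions (F : SimpleGraph ι) (T : Matrix ι ι 𝕜) : Convex ℝ (completions F T) := by
  intro P hP Q hQ a b _ _ hab i j hij
  rw [Matrix.add_apply, Matrix.smul_apply, Matrix.smul_apply, hP i j hij, hQ i j hij, ← add_smul,
    hab, one_smul]

lemma isClosed_completions (F : SimpleGraph ι) (T : Matrix ι ι 𝕜) :
    IsClosed (completions F T) := by
  simp only [completions, Set.ofPred_forall]
  exact isClosed_iInter fun i ↦ isClosed_iInter fun j ↦ isClosed_iInter fun _ ↦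
    isClosed_eq (by fun_prop) continuous_const

lemma eq_zero_of_forall_lt_re_mul {z : 𝕜} {a : ℝ} (h : ∀ c : 𝕜, a < re (z * c)) : z = 0 := by
  by_contra hz
  have := h ((a : 𝕜) / z)
  rw [mul_div_cancel₀ _ hz, ofReal_re] at this
  exact this.false

variable [Fintype ι]

section

open scoped Matrix.Norms.Frobenius

lemma frobenius_norm_sq_eq_re_trace {κ : Type*} [Fintype κ] (V : Matrix κ ι 𝕜) :
    ‖V‖ ^ 2 = re (Vᴴ * V).trace := by
  rw [frobenius_norm_def, ← Real.sqrt_eq_rpow, Real.sq_sqrt (by positivity), Finset.sum_comm]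
  simp_rw [trace, diag, mul_apply, conjTranspose_apply, star_def, RCLike.conj_mul, map_sum,
    ← ofReal_pow, ofReal_re, Real.rpow_two]

end

lemma convex_posSemidef_trace_le (r : ℝ) :
    Convex ℝ {P : Matrix ι ι 𝕜 | P.PosSemidef ∧ re P.trace ≤ r} := by
  refine Convex.inter (fun P hP Q hQ a b ha hb _ ↦ (PosSemidef.smul hP ha).add (.smul hQ hb)) ?_
  exact convex_halfSpace_le (f := fun P : Matrix ι ι 𝕜 ↦ re P.trace)
    ⟨by simp, by simp [smul_re]⟩ r

lemma isCompact_posSemidef_trace_le {r : ℝ} (hr : 0 ≤ r) :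
    IsCompact {P : Matrix ι ι 𝕜 | P.PosSemidef ∧ re P.trace ≤ r} := by
  classical
  let : NormedAddCommGroup (Matrix ι ι 𝕜) := frobeniusNormedAddCommGroup
  let : NormedSpace 𝕜 (Matrix ι ι 𝕜) := frobeniusNormedSpace
  have : ProperSpace (Matrix ι ι 𝕜) := FiniteDimensional.proper 𝕜 _
  convert (isCompact_closedBall (0 : Matrix ι ι 𝕜) √r).image
    (f := fun V ↦ Vᴴ * V) (by fun_prop) using 1
  ext P
  simp_rw [Set.mem_image, mem_closedBall_zero_iff, Real.le_sqrt (norm_nonneg _) hr,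
    frobenius_norm_sq_eq_re_trace]
  constructor
  · rintro ⟨hP, hr⟩
    obtain ⟨V, rfl⟩ := CStarAlgebra.nonneg_iff_eq_star_mul_self.mp hP.nonneg
    exact ⟨V, hr, rfl⟩
  · rintro ⟨V, hV, rfl⟩
    exact ⟨posSemidef_conjTranspose_mul_self V, hV⟩

lemma exists_eq_trace_mul (f : Matrix ι ι 𝕜 →ₗ[𝕜] 𝕜) :
    ∃ N : Matrix ι ι 𝕜, ∀ P, f P = (N * P).trace := by
  classical
  refine ⟨of fun i j ↦ f (single j i 1), fun P ↦ ?_⟩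
  have : f = traceLinearMap ι 𝕜 𝕜 ∘ₗ LinearMap.mulLeft 𝕜 (of fun i j ↦ f (single j i 1)) :=
    ext_linearMap 𝕜 fun i j ↦ LinearMap.ext_ring (by simp [trace_mul_single])
  exact LinearMap.congr_fun this P

lemma exists_isHermitian_re_eq_re_trace_mul (N : Matrix ι ι 𝕜) :
    ∃ H : Matrix ι ι 𝕜, H.IsHermitian ∧ (∀ i j, N i j = 0 → N j i = 0 → H i j = 0) ∧
      ∀ P : Matrix ι ι 𝕜, P.IsHermitian → re (H * P).trace = re (N * P).trace := by
  refine ⟨(1 / 2 : ℝ) • (N + Nᴴ), ?_, fun i j hij hji ↦ by simp [hij, hji], fun P hP ↦ ?_⟩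
  · exact (isHermitian_add_transpose_self N).smul (by simp)
  · have : (Nᴴ * P).trace = star (N * P).trace := by
      rw [← trace_conjTranspose, conjTranspose_mul, hP.eq, trace_mul_comm]
    rw [smul_mul, add_mul, trace_smul, trace_add, this, smul_re, map_add, star_def, conj_re]
    ring

lemma exists_re_trace_mul_lt_of_disjoint {s t : Set (Matrix ι ι 𝕜)} (hs : Convex ℝ s)
    (hs' : IsCompact s) (ht : Convex ℝ t) (ht' : IsClosed t) (hst : Disjoint s t) :
    ∃ (N : Matrix ι ι 𝕜) (u v : ℝ), (∀ P ∈ s, re (N * P).trace < u) ∧ u < v ∧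
      ∀ Q ∈ t, v < re (N * Q).trace := by
  have : LocallyConvexSpace ℝ (Matrix ι ι 𝕜) := inferInstanceAs (LocallyConvexSpace ℝ (ι → ι → 𝕜))
  obtain ⟨f, u, v, hfu, huv, hvf⟩ :=
    RCLike.geometric_hahn_banach_compact_closed (𝕜 := 𝕜) hs hs' ht ht' hst
  obtain ⟨N, hN⟩ := exists_eq_trace_mul f.toLinearMap
  simp only [ContinuousLinearMap.coe_coe] at hN
  exact ⟨N, u, v, fun P hP ↦ hN P ▸ hfu P hP, huv, fun Q hQ ↦ hN Q ▸ hvf Q hQ⟩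

lemma dotProduct_mulVec_eq_trace_mul_vecMulVec {R κ : Type*} [CommSemiring R] [Fintype κ]
    (x : κ → R) (M : Matrix κ ι R) (y : ι → R) :
    x ⬝ᵥ M *ᵥ y = (M * vecMulVec y x).trace := by
  rw [mul_vecMulVec, trace_vecMulVec, dotProduct_comm]

lemma posDef_smul_one_sub [DecidableEq ι] {G : Matrix ι ι 𝕜} (hG : G.IsHermitian) {r u : ℝ}
    (hr : 0 < r) (h : ∀ P : Matrix ι ι 𝕜, P.PosSemidef → re P.trace ≤ r → re (G * P).trace < u) :
    ((u / r) • (1 : Matrix ι ι 𝕜) - G).PosDef := by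
  have hH : ((u / r) • (1 : Matrix ι ι 𝕜) - G).IsHermitian :=
    (isHermitian_one.smul (.all _)).sub hG
  refine .of_dotProduct_mulVec_pos hH fun x hx ↦
    pos_iff.2 ⟨?_, hH.im_star_dotProduct_mulVec_self x⟩
  have ht : 0 < re (vecMulVec x (star x)).trace := by
    rw [trace_vecMulVec, dotProduct_comm]
    exact (pos_iff.1 (dotProduct_star_self_pos_iff.2 hx)).1
  set P := vecMulVec x (star x)
  have hP := h ((r / re P.trace) • P)
    ((posSemidef_vecMulVec_self_star x).smul (by positivity))
    (by rw [trace_smul, smul_re, div_mul_cancel₀ _ ht.ne'])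
  rw [Matrix.mul_smul, trace_smul, smul_re, div_mul_eq_mul_div, div_lt_iff₀ ht] at hP
  rw [dotProduct_mulVec_eq_trace_mul_vecMulVec, sub_mul, trace_sub, map_sub, Matrix.smul_mul,
    one_mul, trace_smul, smul_re, sub_pos, div_mul_eq_mul_div, lt_div_iff₀ hr, mul_comm]
  exact hP

lemma exists_isHermitian_separating_completions {F : SimpleGraph ι} {T : Matrix ι ι 𝕜} {r : ℝ}
    (hT : T.IsHermitian) (hr : 0 ≤ r) (hne : ∀ P ∈ completions F T, P.PosSemidef → r < re P.trace) :
    ∃ (G : Matrix ι ι 𝕜) (u : ℝ), G.IsHermitian ∧ (∀ i j, F.Adj i j → G i j = 0) ∧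
      (∀ P : Matrix ι ι 𝕜, P.PosSemidef → re P.trace ≤ r → re (G * P).trace < u) ∧
      u < re (G * T).trace := by
  classical
  have hdisj : Disjoint {P : Matrix ι ι 𝕜 | P.PosSemidef ∧ re P.trace ≤ r} (completions F T) :=
    Set.disjoint_left.2 fun P hP hPT ↦ hP.2.not_gt (hne P hPT hP.1)
  obtain ⟨N, u, v, hNu, huv, hvN⟩ :=
    exists_re_trace_mul_lt_of_disjoint (convex_posSemidef_trace_le r)
      (isCompact_posSemidef_trace_le hr) (convex_completions F T) (isClosed_completions F T) hdisj
  obtain ⟨G, hG, hG0, hGN⟩ := exists_isHermitian_re_eq_re_trace_mul N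
  have hN0 {i j : ι} (hij : F.Adj i j) : N j i = 0 := by
    refine eq_zero_of_forall_lt_re_mul (𝕜 := 𝕜) (a := v - re (N * T).trace) fun c ↦ ?_
    have hline := hvN (T + single i j c) fun k l hkl ↦ by
      rw [Matrix.add_apply, single_apply_of_ne, add_zero]
      rintro ⟨rfl, rfl⟩
      exact hkl hij
    rw [mul_add, trace_add, map_add, trace_mul_single,
      MulOpposite.smul_eq_mul_unop, MulOpposite.unop_op] at hline
    linarith
  exact ⟨G, u, hG, fun i j hij ↦ hG0 i j (hN0 hij.symm) (hN0 hij),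
    fun P hP htr ↦ hGN P hP.isHermitian ▸ hNu P ⟨hP, htr⟩,
    hGN T hT ▸ huv.trans (hvN T fun _ _ _ ↦ rfl)⟩

theorem exists_posSemidef_completion {F : SimpleGraph ι} {T : Matrix ι ι 𝕜} (hT : T.IsHermitian)
    (h : ∀ H : Matrix ι ι 𝕜, H.PosDef → (∀ i j, F.Adj i j → H i j = 0) → 0 ≤ re (H * T).trace) :
    ∃ P ∈ completions F T, P.PosSemidef := by
  classical
  by_contra! hne
  have htr : 0 ≤ re T.trace := by
    simpa using h 1 .one fun i j hij ↦ one_apply_ne hij.ne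
  -- A matrix `G` separating the completions from the compact set `{0 ≤ P, tr P ≤ r}`, `r > tr T`,
  -- at level `u` yields the test matrix `H = (u / r) • 1 - G`, for which `re tr (H T) < 0`.
  have hr : 0 < re T.trace + 1 := by positivity
  obtain ⟨G, u, hG, hGF, hGu, huG⟩ :=
    exists_isHermitian_separating_completions hT hr.le fun P hPT hP ↦ absurd hP (hne P hPT)
  have hu : 0 < u := by simpa using hGu 0 .zero (by simpa using hr.le)
  have hH := h _ (posDef_smul_one_sub hG hr hGu) fun i j hij ↦ by
    simp [hGF i j hij, one_apply_ne hij.ne]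
  rw [sub_mul, trace_sub, map_sub, Matrix.smul_mul, one_mul, trace_smul, smul_re] at hH
  have hle : u / (re T.trace + 1) * re T.trace ≤ u := by
    rw [div_mul_eq_mul_div, div_le_iff₀ hr]
    gcongr
    linarith
  linarith [huG]

end Completion

section Correlation

open Matrix RCLike

variable {𝕜 ι : Type*} [RCLike 𝕜] [Fintype ι] [DecidableEq ι]

lemma exists_eq_diagonal_mul_mul_diagonal {K : Matrix ι ι 𝕜} (hK : K.PosDef) :
    ∃ (R : Matrix ι ι 𝕜) (d : ι → ℝ), R.PosSemidef ∧ (∀ i, R i i = 1) ∧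
      (∀ i j, K i j = 0 → R i j = 0) ∧
      K = diagonal (fun i ↦ (d i : 𝕜)) * R * diagonal (fun i ↦ (d i : 𝕜)) := by
  set d : ι → ℝ := fun i ↦ √(re (K i i))
  have hd (i : ι) : (d i : 𝕜) ≠ 0 :=
    ofReal_ne_zero.2 (Real.sqrt_pos.2 (pos_iff.1 hK.diag_pos).1).ne'
  have hdd (i : ι) : (d i : 𝕜) * d i = K i i := by
    rw [← ofReal_mul, Real.mul_self_sqrt (pos_iff.1 hK.diag_pos).1.le,
      hK.isHermitian.coe_re_apply_self]
  refine ⟨diagonal (fun i ↦ (d i : 𝕜)⁻¹) * K * diagonal (fun i ↦ (d i : 𝕜)⁻¹), d, ?_, fun i ↦ ?_,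
    fun i j hij ↦ by simp [hij], ?_⟩
  · convert hK.posSemidef.conjTranspose_mul_mul_same (diagonal fun i ↦ (d i : 𝕜)⁻¹) using 3
    simp [diagonal_conjTranspose, Pi.star_def]
  · simp [← hdd, hd]
  · ext i j
    simp [← mul_assoc, hd]

lemma re_trace_diagonal_mul_mul_diagonal_mul_transpose_nonneg {R T : Matrix ι ι 𝕜}
    (h : (R ⊙ T).PosSemidef) (d : ι → ℝ) :
    0 ≤ re (diagonal (fun i ↦ (d i : 𝕜)) * R * diagonal (fun i ↦ (d i : 𝕜)) * Tᵀ).trace := by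
  have hd : star (fun i ↦ (d i : 𝕜)) = fun i ↦ (d i : 𝕜) := funext fun i ↦ conj_ofReal _
  have := (nonneg_iff.1 (h.dotProduct_mulVec_nonneg fun i ↦ (d i : 𝕜))).1
  rwa [dotProduct_mulVec, dotProduct_vecMul_hadamard, hd, transpose_mul, diagonal_transpose,
    ← mul_assoc] at this

end Correlation

section NormBlock

open Matrix RCLike

variable {𝕜 m n : Type*} [RCLike 𝕜] [DecidableEq m] [DecidableEq n]

/-- The block matrix `[[c, M], [Mᴴ, c]]`, which is positive semidefinite exactly when the operator
norm of `M` is at most `c`. -/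
noncomputable def normBlock (c : ℝ) (M : Matrix m n 𝕜) : Matrix (m ⊕ n) (m ⊕ n) 𝕜 :=
  fromBlocks (c • 1) M Mᴴ (c • 1)

lemma isHermitian_normBlock (c : ℝ) (M : Matrix m n 𝕜) : (normBlock c M).IsHermitian :=
  .fromBlocks (isHermitian_one.smul (.all c)) rfl (isHermitian_one.smul (.all c))

lemma normBlock_apply_self (c : ℝ) (M : Matrix m n 𝕜) (i : m ⊕ n) : normBlock c M i i = c := by
  cases i <;> simp [normBlock, real_smul_eq_coe_mul]

lemma eq_normBlock {P : Matrix (m ⊕ n) (m ⊕ n) 𝕜} {c : ℝ} (hP : P.IsHermitian)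
    (hdiag : ∀ i, P i i = c)
    (hoff : ∀ i j, (⊤ ⊕g ⊤ : SimpleGraph (m ⊕ n)).Adj i j → P i j = 0) :
    P = normBlock c P.toBlocks₁₂ := by
  ext (i | i) (j | j)
  · obtain rfl | hij := eq_or_ne i j
    · simp [normBlock, hdiag, real_smul_eq_coe_mul]
    · simp [normBlock, hoff (.inl i) (.inl j) hij, hij]
  · rfl
  · exact (hP.apply _ _).symm
  · obtain rfl | hij := eq_or_ne i j
    · simp [normBlock, hdiag, real_smul_eq_coe_mul]
    · simp [normBlock, hoff (.inr i) (.inr j) hij, hij]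

lemma hadamard_normBlock_one {P : Matrix (m ⊕ n) (m ⊕ n) 𝕜} {c : ℝ} (hP : P.IsHermitian)
    (hdiag : ∀ i, P i i = c) (C : Matrix m n 𝕜) :
    P ⊙ normBlock 1 C = normBlock c (P.toBlocks₁₂ ⊙ C) := by
  refine eq_normBlock (hP.hadamard (isHermitian_normBlock 1 C)) (fun i ↦ ?_) ?_
  · simp [hdiag, normBlock_apply_self]
  · rintro (i | i) (j | j) hij <;> simp_all [normBlock]

variable [Fintype m] [Fintype n]

lemma re_star_dotProduct_normBlock_mulVec (M : Matrix m n 𝕜) (c : ℝ) (x : EuclideanSpace 𝕜 m)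
    (y : EuclideanSpace 𝕜 n) :
    re (star (Sum.elim x y) ⬝ᵥ normBlock c M *ᵥ Sum.elim x y) =
      c * (‖x‖ ^ 2 + ‖y‖ ^ 2) + 2 * re (inner 𝕜 x (toEuclideanLin M y)) := by
  have hxy : star y.ofLp ⬝ᵥ Mᴴ *ᵥ x.ofLp = star (star x.ofLp ⬝ᵥ M *ᵥ y.ofLp) := by
    rw [star_dotProduct, star_mulVec, dotProduct_mulVec, conjTranspose_conjTranspose]
  have hstar : star (Sum.elim x.ofLp y.ofLp) = Sum.elim (star x.ofLp) (star y.ofLp) :=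
    Function.star_sumElim _ _
  rw [normBlock, hstar, fromBlocks_mulVec, sumElim_dotProduct_sumElim, Sum.elim_comp_inl,
    Sum.elim_comp_inr, dotProduct_add, dotProduct_add, hxy, smul_mulVec, smul_mulVec, one_mulVec,
    one_mulVec, norm_sq_eq_re_inner (𝕜 := 𝕜) x, norm_sq_eq_re_inner (𝕜 := 𝕜) y]
  simp_rw [EuclideanSpace.inner_eq_star_dotProduct, ofLp_toLpLin, toLin'_apply, dotProduct_smul,
    map_add, smul_re, star_def, conj_re, dotProduct_comm]
  ring

end NormBlock

section SchurNorm

open Matrix RCLike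

variable {m n : Type*} [Fintype m] [Fintype n] [DecidableEq n]

lemma copNorm_le_iff_posSemidef_normBlock [DecidableEq m] (M : Matrix m n ℂ) {c : ℝ} (hc : 0 ≤ c) :
    M.copNorm ≤ c ↔ (normBlock c M).PosSemidef := by
  constructor
  · intro h
    refine .of_dotProduct_mulVec_nonneg (isHermitian_normBlock c M) fun z ↦
      nonneg_iff.2 ⟨?_, (isHermitian_normBlock c M).im_star_dotProduct_mulVec_self z⟩
    obtain ⟨x, y, rfl⟩ : ∃ (x : EuclideanSpace ℂ m) (y : EuclideanSpace ℂ n), z = Sum.elim x y :=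
      ⟨.toLp 2 (z ∘ Sum.inl), .toLp 2 (z ∘ Sum.inr), (Sum.elim_comp_inl_inr z).symm⟩
    rw [re_star_dotProduct_normBlock_mulVec]
    have hinner : -(‖x‖ * (c * ‖y‖)) ≤ re (inner ℂ x (toEuclideanLin M y)) := by
      refine (abs_le.1 ((abs_re_le_norm _).trans ((norm_inner_le_norm _ _).trans ?_))).1
      gcongr
      exact ContinuousLinearMap.le_of_opNorm_le _ h y
    nlinarith [mul_nonneg hc (sq_nonneg (‖x‖ - ‖y‖))]
  · intro h
    refine ContinuousLinearMap.opNorm_le_of_re_inner_le (𝕜 := ℂ) hc fun y x hy hx ↦ ?_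
    have := (nonneg_iff.1 (h.dotProduct_mulVec_nonneg (Sum.elim (-x) y))).1
    rw [← WithLp.ofLp_neg, re_star_dotProduct_normBlock_mulVec, norm_neg, hx, hy, inner_neg_left,
      map_neg, inner_re_symm] at this
    change re (inner ℂ (toEuclideanLin M y) x) ≤ c
    linarith

lemma copNorm_hadamard_le {P : Matrix (m ⊕ n) (m ⊕ n) ℂ} {c : ℝ} (hP : P.PosSemidef)
    (hc : 0 ≤ c) (hdiag : ∀ i, P i i = c) {C : Matrix m n ℂ} (hC : C.copNorm ≤ 1) :
    (P.toBlocks₁₂ ⊙ C).copNorm ≤ c := by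
  classical
  rw [copNorm_le_iff_posSemidef_normBlock _ hc, ← hadamard_normBlock_one hP.isHermitian hdiag]
  exact hP.hadamard ((copNorm_le_iff_posSemidef_normBlock C zero_le_one).1 hC)

lemma copNorm_hadamard_le_copNorm (A : Matrix m n ℂ) {C : Matrix m n ℂ} (hC : C.copNorm ≤ 1) :
    (A ⊙ C).copNorm ≤ A.copNorm := by
  classical
  exact copNorm_hadamard_le ((copNorm_le_iff_posSemidef_normBlock A (norm_nonneg _)).1 le_rfl)
    (norm_nonneg _) (normBlock_apply_self _ A) hC

lemma copNorm_hadamard_le_schurNorm (A : Matrix n n ℂ) {C : Matrix n n ℂ} (hC : C.copNorm ≤ 1) :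
    (A ⊙ C).copNorm ≤ A.schurNorm :=
  le_csSup ⟨A.copNorm, by rintro _ ⟨D, hD, rfl⟩; exact copNorm_hadamard_le_copNorm A hD⟩
    ⟨C, hC, rfl⟩

lemma schurNorm_nonneg (A : Matrix n n ℂ) : 0 ≤ A.schurNorm :=
  Real.sSup_nonneg (by rintro _ ⟨C, -, rfl⟩; exact norm_nonneg _)

lemma schurNorm_toBlocks₁₂_le {P : Matrix (n ⊕ n) (n ⊕ n) ℂ} {c : ℝ} (hP : P.PosSemidef)
    (hc : 0 ≤ c) (hdiag : ∀ i, P i i = c) : P.toBlocks₁₂.schurNorm ≤ c :=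
  Real.sSup_le (by rintro _ ⟨C, hC, rfl⟩; exact copNorm_hadamard_le hP hc hdiag hC) hc

lemma re_trace_mul_normBlock_schurNorm_nonneg (A : Matrix n n ℂ)
    {H : Matrix (n ⊕ n) (n ⊕ n) ℂ} (hH : H.PosDef)
    (hoff : ∀ i j, (⊤ ⊕g ⊤ : SimpleGraph (n ⊕ n)).Adj i j → H i j = 0) :
    0 ≤ re (H * normBlock A.schurNorm A).trace := by
  obtain ⟨R, d, hR, hdiag, hR0, hHR⟩ := exists_eq_diagonal_mul_mul_diagonal hH.transpose
  obtain ⟨C, rfl⟩ : ∃ C, R = normBlock 1 C :=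
    ⟨_, eq_normBlock hR.isHermitian (by simpa using hdiag) fun i j hij ↦
      hR0 i j (hoff j i hij.symm)⟩
  have hC : C.copNorm ≤ 1 := (copNorm_le_iff_posSemidef_normBlock C zero_le_one).2 hR
  have hAC : (normBlock 1 C ⊙ normBlock A.schurNorm A).PosSemidef := by
    rw [hadamard_comm,
      hadamard_normBlock_one (isHermitian_normBlock _ A) (normBlock_apply_self _ A)]
    exact (copNorm_le_iff_posSemidef_normBlock _ (schurNorm_nonneg A)).1
      (copNorm_hadamard_le_schurNorm A hC)
  rw [← trace_transpose, transpose_mul, trace_mul_comm, hHR]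
  exact re_trace_diagonal_mul_mul_diagonal_mul_transpose_nonneg hAC d

lemma exists_posSemidef_toBlocks₁₂_eq (A : Matrix n n ℂ) :
    ∃ P : Matrix (n ⊕ n) (n ⊕ n) ℂ,
      P.PosSemidef ∧ (∀ i, P i i = A.schurNorm) ∧ P.toBlocks₁₂ = A := by
  obtain ⟨P, hPT, hP⟩ := exists_posSemidef_completion (isHermitian_normBlock A.schurNorm A)
    fun H hH ↦ re_trace_mul_normBlock_schurNorm_nonneg A hH
  refine ⟨P, hP, fun i ↦ (hPT i i (SimpleGraph.irrefl _)).trans (normBlock_apply_self _ A i), ?_⟩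
  ext i j
  exact hPT (.inl i) (.inr j) (SimpleGraph.not_adj_sum_inl_inr i j)

theorem schurNorm_sdp_general (A : Matrix n n ℂ) :
    IsLeast {c : ℝ | 0 ≤ c ∧ ∃ Y Z : Matrix n n ℂ,
        Y.IsHermitian ∧ Z.IsHermitian ∧
        (∀ j, Y j j = (c : ℂ)) ∧ (∀ j, Z j j = (c : ℂ)) ∧
        (fromBlocks Y A Aᴴ Z).PosSemidef}
      A.schurNorm := by
  constructor
  · obtain ⟨P, hP, hdiag, rfl⟩ := exists_posSemidef_toBlocks₁₂_eq A
    refine ⟨schurNorm_nonneg _, P.toBlocks₁₁, P.toBlocks₂₂, hP.isHermitian.submatrix _,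
      hP.isHermitian.submatrix _, fun j ↦ hdiag (.inl j), fun j ↦ hdiag (.inr j), ?_⟩
    have hP₂₁ : P.toBlocks₁₂ᴴ = P.toBlocks₂₁ := Matrix.ext fun _ _ ↦ hP.isHermitian.apply _ _
    rwa [hP₂₁, fromBlocks_toBlocks]
  · rintro c ⟨hc, Y, Z, -, -, hY, hZ, hP⟩
    have hA := schurNorm_toBlocks₁₂_le hP hc (Sum.forall.2 ⟨hY, hZ⟩)
    rwa [toBlocks_fromBlocks₁₂] at hA

end SchurNorm

/-- The Schur norm of `A` is the least `c ≥ 0` for which there are Hermitian matrices `Y`, `Z`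
with all diagonal entries equal to `c` such that the block matrix `[[Y, A], [Aᴴ, Z]]` is
positive semidefinite; in particular this infimum is attained. -/
theorem schurNorm_sdp (n : ℕ) (hn : 0 < n) (A : Matrix (Fin n) (Fin n) ℂ) :
    IsLeast {c : ℝ | 0 ≤ c ∧ ∃ Y Z : Matrix (Fin n) (Fin n) ℂ,
        Y.IsHermitian ∧ Z.IsHermitian ∧
        (∀ j, Y j j = (c : ℂ)) ∧ (∀ j, Z j j = (c : ℂ)) ∧
        (Matrix.fromBlocks Y A A.conjTranspose Z).PosSemidef}
      (Matrix.schurNorm A) :=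
  schurNorm_sdp_general A
end
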